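/- Under the stated hypotheses, if ‖V‖ < c_π·d with c_π = (3π − √(π² + 32))/(π² − 4), then ‖E_A(σ) − E_B(O_{d/2}(σ))‖ ≤ (π/2)·‖V‖/(d − δ_V) < 1. -/

import Mathlib

/-- `E` is the projection-valued spectral measure of the bounded self-adjoint operator `T`
on the complex Hilbert space `H`: each `E Δ` (for Borel `Δ ⊆ ℝ`) is an orthogonal
projection, `E` is multiplicative and countably additive (in the strong sense), `E ℝ = 1`,
each `E Δ` commutes with `T`, and on the range of `E Δ` the operator `T` has its
approximate point spectrum inside the closure of `Δ` (which uniquely characterizes the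
spectral measure of `T`). -/
structure IsSpectralMeasure {H : Type*} [NormedAddCommGroup H] [InnerProductSpace ℂ H]
    [CompleteSpace H] (T : H →L[ℂ] H) (E : Set ℝ → H →L[ℂ] H) : Prop where
  isSelfAdjoint : ∀ Δ : Set ℝ, MeasurableSet Δ → IsSelfAdjoint (E Δ)
  map_inter : ∀ Δ₁ Δ₂ : Set ℝ, MeasurableSet Δ₁ → MeasurableSet Δ₂ →
    E Δ₁ * E Δ₂ = E (Δ₁ ∩ Δ₂)
  map_univ : E Set.univ = 1
  countably_additive : ∀ Δ : ℕ → Set ℝ, (∀ n, MeasurableSet (Δ n)) →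
    Pairwise (Function.onFun Disjoint Δ) →
    ∀ x : H, HasSum (fun n => E (Δ n) x) (E (⋃ n, Δ n) x)
  commutes : ∀ Δ : Set ℝ, MeasurableSet Δ → Commute T (E Δ)
  spectrum_loc : ∀ Δ : Set ℝ, MeasurableSet Δ → ∀ x : H, E Δ x = x →
    ∀ μ : ℝ, Metric.infDist μ Δ * ‖x‖ ≤ ‖T x - (μ : ℂ) • x‖

open scoped Real

/-!
An off-diagonal perturbation moves the spectrum by at most `δ`, the nonnegative root of
`‖V‖² = δ (δ + d)`: if the spectral interval `I` of `A` starts at `m`, the gap forces one of the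
two parts of `I` to start at `m + d`, so the quadratic form of `A + V` on `Ran E_A(I)` is bounded
below by the least eigenvalue `m - δ` of `!![m, ‖V‖; ‖V‖, m + d]`. Hence the spectrum of `B`
splits into a part `δ`-close to `σ`, inside the `d/2`-neighborhood, and a part `δ`-close to `Σ`,
outside it.

If spectral sets `S₁` of `A` and `S₂` of `B` have distance `D`, the product
`X = E_A(S₁) E_B(S₂)` solves the Sylvester equation `A X - X B = E_A(S₁) (A - B) E_B(S₂)`, and
`‖X‖ ≤ (π/2) ‖A - B‖ / D`, with `π/2` the Bohr–Favard constant. After an approximation by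
operators with finite spectrum this becomes the Bohr–Favard inequality for trigonometric sums with
frequencies at least `D` in absolute value, applied to `t ↦ exp(itA) X exp(-itB)`. It is proved
with the kernel `sin t · ∫₀^∞ tanh(πu/2) exp(-u|t|) du`. Applied to `σ`, `Σ` and the
complementary spectral parts of `B` with `D = d - δ`, this gives the bound.
-/

section BohrFavard

open MeasureTheory Set Filter Topology

lemma hasSum_coth {u : ℝ} (hu : u ≠ 0) :
    HasSum (fun n : ℕ => 2 * u / (u ^ 2 + (n + 1) ^ 2))
      (π * Real.cosh (π * u) / Real.sinh (π * u) - 1 / u) := by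
  have hui : (u * Complex.I : ℂ) ∈ Complex.integerComplement := by
    rintro ⟨n, hn⟩
    exact hu (by simpa using congrArg Complex.im hn.symm)
  have hterm (n : ℕ) : Complex.I * cotTerm (u * Complex.I) n
      = ((2 * u / (u ^ 2 + (n + 1) ^ 2) : ℝ) : ℂ) := by
    have hne : ((u : ℂ) ^ 2 + (n + 1) ^ 2) ≠ 0 := by
      exact_mod_cast (by positivity : u ^ 2 + ((n : ℝ) + 1) ^ 2 ≠ 0)
    have hsq : ((u * Complex.I : ℂ) + (n + 1)) * (u * Complex.I - (n + 1))
        = -(u ^ 2 + (n + 1) ^ 2) := by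
      linear_combination (u ^ 2 : ℂ) * Complex.I_sq
    rw [cotTerm_identity hui, one_div, hsq]
    push_cast
    field_simp
    linear_combination (-u : ℂ) * Complex.I_sq
  have hlim : Complex.I * ∑' n : ℕ, cotTerm (u * Complex.I) n
      = ((π * Real.cosh (π * u) / Real.sinh (π * u) - 1 / u : ℝ) : ℂ) := by
    have hsinh : (Real.sinh (π * u) : ℂ) ≠ 0 := by
      exact_mod_cast Real.sinh_eq_zero.not.mpr (mul_ne_zero Real.pi_ne_zero hu)
    have hu' : (u : ℂ) ≠ 0 := mod_cast hu
    have hrep : (∑' n : ℕ, cotTerm (u * Complex.I) n)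
      = π * (π * (u * Complex.I) : ℂ).cot - 1 / (u * Complex.I) := (cot_series_rep' hui).symm
    rw [hrep, Complex.cot, ← mul_assoc, Complex.cos_mul_I, Complex.sin_mul_I]
    push_cast at hsinh ⊢
    field_simp
  rw [← Complex.hasSum_ofReal, ← hlim, ← funext hterm]
  exact (summable_cotTerm hui).hasSum.mul_left _

lemma hasSum_tanh (u : ℝ) :
    HasSum (fun k : ℕ => 4 / π * (u / (u ^ 2 + (2 * k + 1) ^ 2))) (Real.tanh (π * u / 2)) := by
  rcases eq_or_ne u 0 with rfl | hu
  · simp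
  let f : ℕ → ℝ := fun n => 2 * u / (u ^ 2 + (n + 1) ^ 2)
  have hall : HasSum f _ := hasSum_coth hu
  have heven : HasSum (fun k => f (2 * k)) (∑' k, f (2 * k)) :=
    (hall.summable.comp_injective (mul_right_injective₀ (two_ne_zero' ℕ))).hasSum
  have hodd : HasSum (fun k => f (2 * k + 1))
      ((π * Real.cosh (π * (u / 2)) / Real.sinh (π * (u / 2)) - 1 / (u / 2)) / 2) := by
    have hterm (k : ℕ) : 2 * (u / 2) / ((u / 2) ^ 2 + ((k : ℝ) + 1) ^ 2) / 2 = f (2 * k + 1) := by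
      simp only [f]
      push_cast
      field_simp
      ring
    simpa only [hterm] using (hasSum_coth (div_ne_zero hu two_ne_zero)).div_const 2
  have hval : 2 / π * ∑' k, f (2 * k) = Real.tanh (π * u / 2) := by
    rw [eq_sub_of_add_eq ((heven.even_add_odd hodd).unique hall), ← mul_div_assoc π u 2,
      show π * u = 2 * (π * u / 2) by ring, Real.cosh_two_mul, Real.sinh_two_mul,
      Real.tanh_eq_sinh_div_cosh, ← show π * u = 2 * (π * u / 2) by ring]
    have hsinh : Real.sinh (π * u / 2) ≠ 0 :=
      Real.sinh_eq_zero.not.mpr (by positivity)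
    have hcosh := (Real.cosh_pos (π * u / 2)).ne'
    field_simp
    ring
  have hterm (k : ℕ) : 2 / π * f (2 * k) = 4 / π * (u / (u ^ 2 + (2 * k + 1) ^ 2)) := by
    simp only [f]
    push_cast
    ring
  simpa only [hterm, hval] using heven.mul_left (2 / π)

lemma re_cexp_mul (a u t : ℝ) :
    (Complex.exp ((-u + a * Complex.I) * t)).re = Real.cos (a * t) * Real.exp (-(u * t)) := by
  simp [Complex.exp_re, mul_comm]

lemma integrableOn_cos_mul_exp_neg (a : ℝ) {u : ℝ} (hu : 0 < u) :
    IntegrableOn (fun t => Real.cos (a * t) * Real.exp (-(u * t))) (Ioi 0) := by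
  have hre : (-u + a * Complex.I : ℂ).re < 0 := by simpa using hu
  simpa only [RCLike.re_to_complex, re_cexp_mul, IntegrableOn] using
    (integrableOn_exp_mul_complex_Ioi hre 0).re

lemma integral_cos_mul_exp_neg (a : ℝ) {u : ℝ} (hu : 0 < u) :
    ∫ t in Ioi (0 : ℝ), Real.cos (a * t) * Real.exp (-(u * t)) = u / (u ^ 2 + a ^ 2) := by
  have hre : (-u + a * Complex.I : ℂ).re < 0 := by simpa using hu
  have h := integral_re (integrableOn_exp_mul_complex_Ioi hre 0)
  simp only [RCLike.re_to_complex, re_cexp_mul] at h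
  rw [h, integral_exp_mul_complex_Ioi hre]
  simp [Complex.div_re, Complex.normSq_apply]
  ring

lemma sin_mul_sin_mul_exp_neg (a u t : ℝ) :
    Real.sin (a * t) * Real.sin t * Real.exp (-(u * t))
      = (Real.cos ((a - 1) * t) * Real.exp (-(u * t))
        - Real.cos ((a + 1) * t) * Real.exp (-(u * t))) / 2 := by
  rw [sub_mul, add_mul, one_mul, Real.cos_sub, Real.cos_add]
  ring

lemma integrableOn_sin_mul_sin_mul_exp_neg (a : ℝ) {u : ℝ} (hu : 0 < u) :
    IntegrableOn (fun t => Real.sin (a * t) * Real.sin t * Real.exp (-(u * t))) (Ioi 0) := by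
  simp only [sin_mul_sin_mul_exp_neg]
  exact ((integrableOn_cos_mul_exp_neg _ hu).sub (integrableOn_cos_mul_exp_neg _ hu)).div_const 2

lemma integral_sin_mul_sin_mul_exp_neg (a : ℝ) {u : ℝ} (hu : 0 < u) :
    ∫ t in Ioi (0 : ℝ), Real.sin (a * t) * Real.sin t * Real.exp (-(u * t))
      = (u / (u ^ 2 + (a - 1) ^ 2) - u / (u ^ 2 + (a + 1) ^ 2)) / 2 := by
  simp only [sin_mul_sin_mul_exp_neg]
  rw [integral_div, integral_sub (integrableOn_cos_mul_exp_neg _ hu)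
    (integrableOn_cos_mul_exp_neg _ hu), integral_cos_mul_exp_neg _ hu,
    integral_cos_mul_exp_neg _ hu]

lemma integrableOn_abs_sin_mul_exp_neg {u : ℝ} (hu : 0 < u) :
    IntegrableOn (fun t => |Real.sin t| * Real.exp (-(u * t))) (Ioi 0) := by
  have hexp : IntegrableOn (fun t => Real.exp (-(u * t))) (Ioi 0) := by
    simpa using integrableOn_cos_mul_exp_neg 0 hu
  refine hexp.mono' (by fun_prop) (ae_of_all _ fun t => ?_)
  rw [Real.norm_of_nonneg (by positivity)]
  exact mul_le_of_le_one_left (Real.exp_pos _).le (Real.abs_sin_le_one t)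

lemma setIntegral_Ioi_pi_abs_sin_mul_exp_neg (u : ℝ) :
    ∫ t in Ioi π, |Real.sin t| * Real.exp (-(u * t))
      = Real.exp (-(π * u)) * ∫ t in Ioi (0 : ℝ), |Real.sin t| * Real.exp (-(u * t)) := by
  have hshift (t : ℝ) : |Real.sin (t + π)| * Real.exp (-(u * (t + π)))
      = Real.exp (-(π * u)) * (|Real.sin t| * Real.exp (-(u * t))) := by
    rw [Real.sin_add_pi, abs_neg, mul_left_comm, ← Real.exp_add]
    ring_nf
  rw [← integral_const_mul, ← (measurePreserving_add_right volume π).setIntegral_preimage_emb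
    (MeasurableEquiv.addRight π).measurableEmbedding]
  simp only [hshift, preimage_add_const_Ioi, sub_self]

lemma integral_zero_pi_abs_sin_mul_exp_neg (u : ℝ) :
    ∫ t in (0 : ℝ)..π, |Real.sin t| * Real.exp (-(u * t))
      = (1 + Real.exp (-(π * u))) / (1 + u ^ 2) := by
  have hderiv : ∀ t ∈ uIcc 0 π, HasDerivAt
      (fun t => -(Real.cos t + u * Real.sin t) * Real.exp (-(u * t)) / (1 + u ^ 2))
      (|Real.sin t| * Real.exp (-(u * t))) t := by
    intro t ht
    rw [uIcc_of_le Real.pi_pos.le] at ht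
    rw [abs_of_nonneg (Real.sin_nonneg_of_mem_Icc ht)]
    refine ((((Real.hasDerivAt_cos t).add ((Real.hasDerivAt_sin t).const_mul u)).neg.mul
      ((hasDerivAt_id t).const_mul u).neg.exp).div_const (1 + u ^ 2)).congr_deriv ?_
    simp only [Pi.add_apply, Pi.neg_apply, id]
    field_simp
    ring
  rw [intervalIntegral.integral_eq_sub_of_hasDerivAt hderiv
    (Continuous.intervalIntegrable (by fun_prop) _ _)]
  simp [mul_comm u π]
  ring

lemma tanh_mul_integral_abs_sin_mul_exp_neg {u : ℝ} (hu : 0 < u) :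
    Real.tanh (π * u / 2) * ∫ t in Ioi (0 : ℝ), |Real.sin t| * Real.exp (-(u * t))
      = (1 + u ^ 2)⁻¹ := by
  -- Periodicity of `|sin|` makes the integral `F` solve `F - exp (-π u) * F = ∫ over [0, π]`.
  have hsplit := intervalIntegral.integral_Ioi_sub_Ioi
    (integrableOn_abs_sin_mul_exp_neg hu) Real.pi_pos.le
  rw [setIntegral_Ioi_pi_abs_sin_mul_exp_neg, integral_zero_pi_abs_sin_mul_exp_neg] at hsplit
  have hsq : Real.exp (-(π * u)) = Real.exp (-(π * u / 2)) ^ 2 := by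
    rw [← Real.exp_nat_mul]
    ring_nf
  have hinv : Real.exp (π * u / 2) = (Real.exp (-(π * u / 2)))⁻¹ := by
    rw [Real.exp_neg, inv_inv]
  have hpos := Real.exp_pos (-(π * u / 2))
  rw [hsq] at hsplit
  rw [Real.tanh_eq, hinv]
  field_simp at hsplit ⊢
  linear_combination hsplit

lemma sq_div_sq_add_sq {k : ℝ} (hk : k ≠ 0) (u : ℝ) :
    k ^ 2 / (u ^ 2 + k ^ 2) = (1 + (k⁻¹ * u) ^ 2)⁻¹ := by
  field_simp
  ring

lemma integrableOn_sq_div_sq_add_sq {k : ℝ} (hk : 0 ≤ k) :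
    IntegrableOn (fun u => k ^ 2 / (u ^ 2 + k ^ 2)) (Ioi 0) := by
  rcases hk.eq_or_lt with rfl | hk
  · simp
  simp only [sq_div_sq_add_sq hk.ne']
  exact (integrable_inv_one_add_sq.comp_mul_left' (inv_ne_zero hk.ne')).integrableOn

lemma integral_sq_div_sq_add_sq {k : ℝ} (hk : 0 ≤ k) :
    ∫ u in Ioi (0 : ℝ), k ^ 2 / (u ^ 2 + k ^ 2) = k * (π / 2) := by
  rcases hk.eq_or_lt with rfl | hk
  · simp
  simp only [sq_div_sq_add_sq hk.ne']
  rw [integral_comp_mul_left_Ioi (fun u => (1 + u ^ 2)⁻¹) 0 (inv_pos.mpr hk)]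
  simp

lemma integrableOn_div_sq_add_sq_mul_self {k : ℝ} (hk : 0 < k) :
    IntegrableOn (fun u => u / (u ^ 2 + k ^ 2) * (u / (u ^ 2 + k ^ 2))) (Ioi 0) := by
  refine ((integrableOn_sq_div_sq_add_sq hk.le).div_const (k ^ 2)).mono'
    (by fun_prop) (ae_of_all _ fun u => ?_)
  rw [Real.norm_of_nonneg (mul_self_nonneg _)]
  field_simp
  nlinarith [sq_nonneg k]

lemma integral_div_sq_add_sq_mul_self {k : ℝ} (hk : 0 < k) :
    ∫ u in Ioi (0 : ℝ), u / (u ^ 2 + k ^ 2) * (u / (u ^ 2 + k ^ 2)) = π / (2 * (k + k)) := by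
  have hne (u : ℝ) : u ^ 2 + k ^ 2 ≠ 0 := by positivity
  have hderiv (u : ℝ) : HasDerivAt (fun u => u / (u ^ 2 + k ^ 2))
      (k ^ 2 / (u ^ 2 + k ^ 2) / k ^ 2 - 2 * (u / (u ^ 2 + k ^ 2) * (u / (u ^ 2 + k ^ 2)))) u := by
    refine ((hasDerivAt_id u).div (((hasDerivAt_id u).pow 2).add_const (k ^ 2))
      (hne u)).congr_deriv ?_
    have := hne u
    simp only [id, Pi.pow_apply]
    field_simp
    push_cast
    ring
  have hlim : Tendsto (fun u : ℝ => u / (u ^ 2 + k ^ 2)) atTop (𝓝 0) := by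
    refine squeeze_zero' (g := fun u : ℝ => u⁻¹) ?_ ?_ tendsto_inv_atTop_zero
    · filter_upwards [eventually_gt_atTop 0] with u hu
      positivity
    · filter_upwards [eventually_gt_atTop 0] with u hu
      field_simp
      nlinarith [sq_nonneg k]
  have hint₁ := (integrableOn_sq_div_sq_add_sq hk.le).div_const (k ^ 2)
  have hint₂ := (integrableOn_div_sq_add_sq_mul_self hk).const_mul 2
  have h := integral_Ioi_of_hasDerivAt_of_tendsto' (fun u _ => hderiv u) (hint₁.sub hint₂) hlim
  rw [integral_sub hint₁ hint₂, integral_div, integral_const_mul,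
    integral_sq_div_sq_add_sq hk.le, zero_div, sub_zero, sub_eq_zero] at h
  rw [← mul_left_cancel_iff_of_pos two_pos, ← h]
  field_simp
  norm_num

lemma div_sq_add_sq_mul_div_sq_add_sq {k a u : ℝ} (hk : 0 < k) (ha : 0 ≤ a) (hka : k ≠ a)
    (hu : 0 < u) : u / (u ^ 2 + k ^ 2) * (u / (u ^ 2 + a ^ 2))
      = (k ^ 2 / (u ^ 2 + k ^ 2) - a ^ 2 / (u ^ 2 + a ^ 2)) / (k ^ 2 - a ^ 2) := by
  have hne : k ^ 2 - a ^ 2 ≠ 0 := sub_ne_zero.mpr ((pow_left_inj₀ hk.le ha two_ne_zero).not.mpr hka)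
  field_simp
  ring

lemma integrableOn_div_sq_add_sq_mul {k a : ℝ} (hk : 0 < k) (ha : 0 ≤ a) :
    IntegrableOn (fun u => u / (u ^ 2 + k ^ 2) * (u / (u ^ 2 + a ^ 2))) (Ioi 0) := by
  rcases eq_or_ne k a with rfl | hka
  · exact integrableOn_div_sq_add_sq_mul_self hk
  · refine IntegrableOn.congr_fun (((integrableOn_sq_div_sq_add_sq hk.le).sub
      (integrableOn_sq_div_sq_add_sq ha)).div_const (k ^ 2 - a ^ 2)) (fun u hu => ?_)
      measurableSet_Ioi
    exact (div_sq_add_sq_mul_div_sq_add_sq hk ha hka hu).symm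

lemma integral_div_sq_add_sq_mul {k a : ℝ} (hk : 0 < k) (ha : 0 ≤ a) :
    ∫ u in Ioi (0 : ℝ), u / (u ^ 2 + k ^ 2) * (u / (u ^ 2 + a ^ 2)) = π / (2 * (k + a)) := by
  rcases eq_or_ne k a with rfl | hka
  · exact integral_div_sq_add_sq_mul_self hk
  have hne : k - a ≠ 0 := sub_ne_zero.mpr hka
  rw [setIntegral_congr_fun measurableSet_Ioi
      fun u hu => div_sq_add_sq_mul_div_sq_add_sq hk ha hka hu,
    integral_div, integral_sub (integrableOn_sq_div_sq_add_sq hk.le)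
      (integrableOn_sq_div_sq_add_sq ha), integral_sq_div_sq_add_sq hk.le,
    integral_sq_div_sq_add_sq ha, sq_sub_sq]
  field_simp

lemma hasSum_one_div_sub_one_div {a : ℝ} (ha : 0 < a) :
    HasSum (fun k : ℕ => 1 / (2 * k + a) - 1 / (2 * (k + 1 : ℕ) + a)) (1 / a) := by
  have hanti : Antitone fun k : ℕ => 1 / (2 * (k : ℝ) + a) := fun m n hmn => by
    dsimp only
    gcongr
  have hlim : Tendsto (fun k : ℕ => 1 / (2 * (k : ℝ) + a)) atTop (𝓝 0) := by
    simp only [one_div]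
    exact (tendsto_atTop_add_const_right _ _
      (tendsto_natCast_atTop_atTop.const_mul_atTop two_pos)).inv_tendsto_atTop
  rw [hasSum_iff_tendsto_nat_of_nonneg fun k => sub_nonneg.mpr (hanti k.le_succ)]
  simp only [Finset.sum_range_sub' fun k : ℕ => 1 / (2 * (k : ℝ) + a)]
  simpa using hlim.const_sub (1 / a)

lemma tanh_term_eq (a k u : ℝ) :
    4 / π * (u / (u ^ 2 + k ^ 2)) * ((u / (u ^ 2 + (a - 1) ^ 2) - u / (u ^ 2 + (a + 1) ^ 2)) / 2)
      = 2 / π * (u / (u ^ 2 + k ^ 2) * (u / (u ^ 2 + (a - 1) ^ 2))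
        - u / (u ^ 2 + k ^ 2) * (u / (u ^ 2 + (a + 1) ^ 2))) := by
  ring

lemma integrableOn_tanh_term {a k : ℝ} (ha : 1 ≤ a) (hk : 0 < k) :
    IntegrableOn (fun u => 4 / π * (u / (u ^ 2 + k ^ 2)) *
      ((u / (u ^ 2 + (a - 1) ^ 2) - u / (u ^ 2 + (a + 1) ^ 2)) / 2)) (Ioi 0) := by
  simp only [tanh_term_eq]
  exact ((integrableOn_div_sq_add_sq_mul hk (sub_nonneg.mpr ha)).sub
    (integrableOn_div_sq_add_sq_mul hk (by positivity))).const_mul _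

lemma integral_tanh_term {a k : ℝ} (ha : 1 ≤ a) (hk : 0 < k) :
    ∫ u in Ioi (0 : ℝ), 4 / π * (u / (u ^ 2 + k ^ 2)) *
      ((u / (u ^ 2 + (a - 1) ^ 2) - u / (u ^ 2 + (a + 1) ^ 2)) / 2)
      = 1 / (k + (a - 1)) - 1 / (k + (a + 1)) := by
  have ha' : 0 ≤ a - 1 := sub_nonneg.mpr ha
  simp only [tanh_term_eq]
  rw [integral_const_mul, integral_sub (integrableOn_div_sq_add_sq_mul hk ha')
    (integrableOn_div_sq_add_sq_mul hk (by positivity)),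
    integral_div_sq_add_sq_mul hk ha', integral_div_sq_add_sq_mul hk (by positivity)]
  field_simp

lemma integral_tanh_mul_of_one_le {a : ℝ} (ha : 1 ≤ a) :
    ∫ u in Ioi (0 : ℝ), Real.tanh (π * u / 2) *
      ((u / (u ^ 2 + (a - 1) ^ 2) - u / (u ^ 2 + (a + 1) ^ 2)) / 2) = 1 / a := by
  let F (k : ℕ) (u : ℝ) : ℝ := 4 / π * (u / (u ^ 2 + (2 * k + 1) ^ 2)) *
      ((u / (u ^ 2 + (a - 1) ^ 2) - u / (u ^ 2 + (a + 1) ^ 2)) / 2)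
  have hint (k : ℕ) : IntegrableOn (F k) (Ioi 0) := integrableOn_tanh_term ha (by positivity)
  have hval (k : ℕ) : ∫ u in Ioi 0, F k u = 1 / (2 * k + a) - 1 / (2 * (k + 1 : ℕ) + a) := by
    simp only [F, integral_tanh_term ha (by positivity : (0 : ℝ) < 2 * k + 1)]
    push_cast
    ring_nf
  have hnorm (k : ℕ) : ∫ u in Ioi 0, ‖F k u‖ = ∫ u in Ioi 0, F k u := by
    refine setIntegral_congr_fun measurableSet_Ioi fun u (hu : 0 < u) => Real.norm_of_nonneg ?_
    have hmono : u / (u ^ 2 + (a + 1) ^ 2) ≤ u / (u ^ 2 + (a - 1) ^ 2) :=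
      div_le_div_of_nonneg_left hu.le (by positivity) (by nlinarith)
    have := sub_nonneg.mpr hmono
    positivity
  have htelescope := hasSum_one_div_sub_one_div (one_pos.trans_le ha)
  have hsum := hasSum_integral_of_summable_integral_norm hint
    (by simpa only [hnorm, hval] using htelescope.summable)
  simp only [hval] at hsum
  rw [← hsum.unique htelescope]
  refine setIntegral_congr_fun measurableSet_Ioi fun u _ => ?_
  exact ((hasSum_tanh u).mul_right _).tsum_eq.symm

-- The function `t ↦ sin t * ∫ tanh (π u / 2) exp (-u t) du` on `(0, ∞)`, extended oddly, is the
-- extremal kernel: its Fourier transform is `1 / a` wherever `1 ≤ |a|`.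
lemma integral_tanh_mul_integral_sin {a : ℝ} (ha : 1 ≤ |a|) :
    ∫ u in Ioi (0 : ℝ), Real.tanh (π * u / 2) *
      ∫ t in Ioi (0 : ℝ), Real.sin (a * t) * Real.sin t * Real.exp (-(u * t)) = 1 / a := by
  wlog hpos : 1 ≤ a generalizing a
  · have hneg := this (a := -a) (by rwa [abs_neg]) ((le_abs.mp ha).resolve_left hpos)
    simpa [integral_neg, div_neg] using hneg
  · rw [← integral_tanh_mul_of_one_le hpos]
    exact setIntegral_congr_fun measurableSet_Ioi fun u hu =>
      congrArg _ (integral_sin_mul_sin_mul_exp_neg a hu)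

variable {F : Type*} [NormedAddCommGroup F]

section Real

variable [NormedSpace ℝ F]

lemma norm_tanh_smul_integral_sin_le {f : ℝ → F} {S : ℝ} (hf : ∀ t, ‖f t‖ ≤ S) {u : ℝ}
    (hu : 0 < u) :
    ‖Real.tanh (π * u / 2) • ∫ t in Ioi (0 : ℝ), (Real.sin t * Real.exp (-(u * t))) • f t‖
      ≤ S * (1 + u ^ 2)⁻¹ := by
  have htanh : 0 ≤ Real.tanh (π * u / 2) := by
    rw [Real.tanh_eq_sinh_div_cosh]
    exact div_nonneg (Real.sinh_nonneg_iff.mpr (by positivity)) (Real.cosh_pos _).le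
  have hint : ‖∫ t in Ioi (0 : ℝ), (Real.sin t * Real.exp (-(u * t))) • f t‖
      ≤ ∫ t in Ioi (0 : ℝ), S * (|Real.sin t| * Real.exp (-(u * t))) := by
    refine norm_integral_le_of_norm_le ((integrableOn_abs_sin_mul_exp_neg hu).const_mul S)
      (ae_of_all _ fun t => ?_)
    rw [norm_smul, norm_mul, Real.norm_eq_abs, Real.norm_of_nonneg (Real.exp_pos _).le,
      mul_comm S]
    gcongr
    exact hf t
  calc _ = Real.tanh (π * u / 2)
        * ‖∫ t in Ioi (0 : ℝ), (Real.sin t * Real.exp (-(u * t))) • f t‖ := by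
        rw [norm_smul, Real.norm_of_nonneg htanh]
    _ ≤ Real.tanh (π * u / 2) * ∫ t in Ioi (0 : ℝ), S * (|Real.sin t| * Real.exp (-(u * t))) := by
        gcongr
    _ = S * (1 + u ^ 2)⁻¹ := by
        rw [integral_const_mul, mul_left_comm, tanh_mul_integral_abs_sin_mul_exp_neg hu]

lemma norm_integral_tanh_smul_integral_sin_le {f : ℝ → F} {S : ℝ} (hf : ∀ t, ‖f t‖ ≤ S) :
    ‖∫ u in Ioi (0 : ℝ), Real.tanh (π * u / 2) •
      ∫ t in Ioi (0 : ℝ), (Real.sin t * Real.exp (-(u * t))) • f t‖ ≤ π / 2 * S := by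
  have hint := (integrable_inv_one_add_sq.integrableOn (s := Ioi 0)).const_mul S
  refine (norm_integral_le_of_norm_le hint ((ae_restrict_iff' measurableSet_Ioi).mpr
    (ae_of_all _ fun u hu => norm_tanh_smul_integral_sin_le hf hu))).trans_eq ?_
  rw [integral_const_mul, integral_Ioi_inv_one_add_sq, Real.arctan_zero, sub_zero, mul_comm]

variable [CompleteSpace F] {ι : Type*} [Fintype ι] {c : ι → F} {l : ι → ℝ} {S : ℝ}

lemma integral_sin_smul_sum_sin_smul (c : ι → F) (l : ι → ℝ) {u : ℝ} (hu : 0 < u) :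
    ∫ t in Ioi (0 : ℝ), (Real.sin t * Real.exp (-(u * t))) • ∑ i, Real.sin (l i * t) • c i
      = ∑ i, (∫ t in Ioi (0 : ℝ), Real.sin (l i * t) * Real.sin t * Real.exp (-(u * t))) • c i := by
  have hterm (t : ℝ) (i : ι) : (Real.sin t * Real.exp (-(u * t))) • Real.sin (l i * t) • c i
      = (Real.sin (l i * t) * Real.sin t * Real.exp (-(u * t))) • c i := by
    rw [smul_smul]
    ring_nf
  simp only [Finset.smul_sum, hterm]
  rw [integral_finsetSum _ fun i _ =>
    (integrableOn_sin_mul_sin_mul_exp_neg (l i) hu).integrable.smul_const (c i)]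
  simp only [integral_smul_const]

lemma integral_tanh_smul_integral_sin_smul_sum (c : ι → F) (hl : ∀ i, 1 ≤ |l i|) :
    ∫ u in Ioi (0 : ℝ), Real.tanh (π * u / 2) • ∫ t in Ioi (0 : ℝ),
      (Real.sin t * Real.exp (-(u * t))) • ∑ i, Real.sin (l i * t) • c i
      = ∑ i, (1 / l i) • c i := by
  have hne (i : ι) : 1 / l i ≠ 0 := by
    have : 0 < |l i| := one_pos.trans_le (hl i)
    simpa using this
  have hint (i : ι) : IntegrableOn (fun u => Real.tanh (π * u / 2) *
      ∫ t in Ioi (0 : ℝ), Real.sin (l i * t) * Real.sin t * Real.exp (-(u * t))) (Ioi 0) :=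
    .of_integral_ne_zero (by rw [integral_tanh_mul_integral_sin (hl i)]; exact hne i)
  rw [setIntegral_congr_fun measurableSet_Ioi fun u hu =>
    congrArg (Real.tanh (π * u / 2) • ·) (integral_sin_smul_sum_sin_smul c l hu)]
  simp only [Finset.smul_sum, smul_smul]
  rw [integral_finsetSum _ fun i _ => (hint i).integrable.smul_const (c i)]
  simp only [integral_smul_const, integral_tanh_mul_integral_sin (hl _)]

theorem norm_sum_le_of_norm_sum_sin_smul_le (hl : ∀ i, 1 ≤ |l i|)
    (hS : ∀ t, ‖∑ i, Real.sin (l i * t) • l i • c i‖ ≤ S) : ‖∑ i, c i‖ ≤ π / 2 * S := by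
  have hne (i : ι) : l i ≠ 0 := abs_pos.mp (one_pos.trans_le (hl i))
  have h := norm_integral_tanh_smul_integral_sin_le hS
  rw [integral_tanh_smul_integral_sin_smul_sum (fun i => l i • c i) hl] at h
  simpa only [smul_smul, one_div_mul_cancel (hne _), one_smul] using h

end Real

theorem norm_sum_le_of_norm_sum_cexp_smul_le [NormedSpace ℂ F] [CompleteSpace F] {ι : Type*}
    [Fintype ι] {c : ι → F} {l : ι → ℝ} {S : ℝ} (hl : ∀ i, 1 ≤ |l i|)
    (hS : ∀ t : ℝ, ‖∑ i, Complex.exp (t * l i * Complex.I) • (l i : ℂ) • c i‖ ≤ S) :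
    ‖∑ i, c i‖ ≤ π / 2 * S := by
  let _ : NormedSpace ℝ F := NormedSpace.restrictScalars ℝ ℂ F
  refine norm_sum_le_of_norm_sum_sin_smul_le hl fun t => ?_
  have hsin : ∑ i, Real.sin (l i * t) • l i • c i = (Complex.I / 2) •
      (∑ i, Complex.exp ((-t : ℝ) * l i * Complex.I) • (l i : ℂ) • c i
        - ∑ i, Complex.exp (t * l i * Complex.I) • (l i : ℂ) • c i) := by
    rw [← Finset.sum_sub_distrib, Finset.smul_sum]
    refine Finset.sum_congr rfl fun i _ => ?_
    change (Real.sin (l i * t) : ℂ) • (l i : ℂ) • c i = _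
    rw [← sub_smul, smul_smul (Complex.I / 2), Complex.ofReal_sin, Complex.sin]
    push_cast
    ring_nf
  calc _ ≤ ‖Complex.I / 2‖ * (S + S) := by
        rw [hsin, norm_smul]
        gcongr
        exact norm_sub_le_of_le (hS _) (hS _)
    _ = S := by
        rw [norm_div, Complex.norm_I, Complex.norm_ofNat]
        ring

end BohrFavard

section SelfAdjointOperators

variable {H : Type*} [NormedAddCommGroup H] [InnerProductSpace ℂ H]

lemma sub_algebraMap_apply (S : H →L[ℂ] H) (r : ℝ) (x : H) :
    (S - algebraMap ℝ (H →L[ℂ] H) r) x = S x - r • x := by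
  rw [sub_apply, ContinuousLinearMap.algebraMap_apply]

variable [CompleteSpace H] {S : H →L[ℂ] H}

lemma isUnit_of_isSelfAdjoint_of_bounded_below (hS : IsSelfAdjoint S) {c : ℝ} (hc : 0 < c)
    (h : ∀ x, c * ‖x‖ ≤ ‖S x‖) : IsUnit S := by
  -- `S²` is positive definite, so Lax–Milgram applies to it.
  have hsq : IsUnit (S ^ 2) := by
    refine ContinuousLinearMap.isUnit_of_forall_le_norm_inner_map (S ^ 2) (c := (c ^ 2).toNNReal)
      (by positivity) fun x => ?_
    have hx : inner ℂ ((S ^ 2) x) x = (‖S x‖ : ℂ) ^ 2 := by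
      rw [sq, mul_apply_eq_comp]
      exact (hS.isSymmetric (S x) x).trans (inner_self_eq_norm_sq_to_K (S x))
    rw [hx, Real.coe_toNNReal _ (sq_nonneg c), mul_comm, ← mul_pow, norm_pow, Complex.norm_real,
      norm_norm]
    gcongr
    exact h x
  exact (isUnit_pow_iff two_ne_zero).mp hsq

lemma notMem_spectrum_of_bounded_below (hS : IsSelfAdjoint S) {r c : ℝ} (hc : 0 < c)
    (h : ∀ x, c * ‖x‖ ≤ ‖S x - r • x‖) : r ∉ spectrum ℝ S := by
  rw [spectrum.notMem_iff, IsUnit.sub_iff]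
  refine isUnit_of_isSelfAdjoint_of_bounded_below
    (hS.sub ((IsSelfAdjoint.all r).algebraMap _)) hc fun x => ?_
  rw [sub_algebraMap_apply]
  exact h x

lemma exists_bounded_below_of_notMem_spectrum {r : ℝ} (hr : r ∉ spectrum ℝ S) :
    ∃ c > 0, ∀ x, c * ‖x‖ ≤ ‖S x - r • x‖ := by
  rw [spectrum.notMem_iff, IsUnit.sub_iff, ContinuousLinearMap.isUnit_iff_bijective,
    ContinuousLinearMap.bijective_iff_dense_range_and_antilipschitz] at hr
  obtain ⟨-, K, hK⟩ := hr
  refine ⟨(K + 1 : ℝ)⁻¹, by positivity, fun x => ?_⟩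
  have hx := hK.le_mul_norm (map_zero _) x
  rw [sub_algebraMap_apply] at hx
  rw [inv_mul_le_iff₀ (by positivity)]
  exact hx.trans (by gcongr; linarith)

lemma norm_apply_sub_smul_le_of_spectrum (hS : IsSelfAdjoint S) {c h : ℝ} (hh : 0 ≤ h)
    (hs : ∀ s ∈ spectrum ℝ S, |s - c| ≤ h) (x : H) : ‖S x - c • x‖ ≤ h * ‖x‖ := by
  have hnorm : ‖S - algebraMap ℝ (H →L[ℂ] H) c‖ ≤ h := by
    have := norm_cfc_le (a := S) (f := fun s => s - c) hh hs
    rwa [cfc_sub _ (fun _ => c) S, cfc_id' ℝ S, cfc_const c S] at this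
  rw [← sub_algebraMap_apply]
  exact ContinuousLinearMap.le_of_opNorm_le _ hnorm x

lemma mul_norm_sq_le_re_inner_of_spectrum (hS : IsSelfAdjoint S) {m : ℝ}
    (hm : ∀ s ∈ spectrum ℝ S, m ≤ s) (x : H) : m * ‖x‖ ^ 2 ≤ (inner ℂ (S x) x).re := by
  have hpos := ((ContinuousLinearMap.le_def _ _).mp
    ((algebraMap_le_iff_le_spectrum hS).mpr hm)).re_inner_nonneg_left x
  rw [sub_algebraMap_apply, inner_sub_left, map_sub, RCLike.real_smul_eq_coe_smul (K := ℂ),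
    inner_smul_real_left, RCLike.smul_re, inner_self_eq_norm_sq] at hpos
  exact sub_nonneg.mp hpos

end SelfAdjointOperators

section OrthogonalProjections

variable {H : Type*} [NormedAddCommGroup H] [InnerProductSpace ℂ H] [CompleteSpace H]

lemma inner_apply_one_sub_apply {p : H →L[ℂ] H} (hp : IsStarProjection p) (x y : H) :
    inner ℂ (p x) ((1 - p) y) = 0 := by
  have hzero : p ((1 - p) y) = 0 := DFunLike.congr_fun hp.isIdempotentElem.mul_one_sub_self y
  exact (hp.isSelfAdjoint.isSymmetric x _).trans
    ((congrArg (inner ℂ x) hzero).trans (inner_zero_right x))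

lemma norm_apply_sq_add_norm_one_sub_apply_sq {p : H →L[ℂ] H} (hp : IsStarProjection p) (x : H) :
    ‖p x‖ ^ 2 + ‖(1 - p) x‖ ^ 2 = ‖x‖ ^ 2 := by
  have hsum : p x + (1 - p) x = x := by simp
  simpa only [hsum, sq] using (norm_add_sq_eq_norm_sq_add_norm_sq_of_inner_eq_zero _ _
    (inner_apply_one_sub_apply hp x x)).symm

lemma mul_norm_le_norm_apply_of_commute {p S : H →L[ℂ] H} (hp : IsStarProjection p)
    (hcomm : Commute S p) {c : ℝ} (hc : 0 ≤ c) {x : H} (h₁ : c * ‖p x‖ ≤ ‖S (p x)‖)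
    (h₂ : c * ‖(1 - p) x‖ ≤ ‖S ((1 - p) x)‖) : c * ‖x‖ ≤ ‖S x‖ := by
  have hSp : S (p x) = p (S x) := DFunLike.congr_fun hcomm.eq x
  have hSq : S ((1 - p) x) = (1 - p) (S x) :=
    DFunLike.congr_fun ((Commute.one_right S).sub_right hcomm).eq x
  rw [hSp] at h₁
  rw [hSq] at h₂
  refine (pow_le_pow_iff_left₀ (by positivity) (norm_nonneg _) two_ne_zero).mp ?_
  calc (c * ‖x‖) ^ 2 = (c * ‖p x‖) ^ 2 + (c * ‖(1 - p) x‖) ^ 2 := by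
        rw [mul_pow, ← norm_apply_sq_add_norm_one_sub_apply_sq hp, mul_add, mul_pow, mul_pow]
    _ ≤ ‖p (S x)‖ ^ 2 + ‖(1 - p) (S x)‖ ^ 2 := by gcongr
    _ = ‖S x‖ ^ 2 := norm_apply_sq_add_norm_one_sub_apply_sq hp (S x)

lemma norm_sub_le_of_norm_mul_one_sub_le {p q : H →L[ℂ] H} (hp : IsStarProjection p)
    (hq : IsStarProjection q) {k : ℝ} (h₁ : ‖p * (1 - q)‖ ≤ k) (h₂ : ‖(1 - p) * q‖ ≤ k) :
    ‖p - q‖ ≤ k := by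
  have hk : 0 ≤ k := (norm_nonneg _).trans h₁
  refine ContinuousLinearMap.opNorm_le_bound _ hk fun x => ?_
  have hpx : p ((p - q) x) = (p * (1 - q)) ((1 - q) x) := by
    have : p * (p - q) = p * (1 - q) * (1 - q) := by
      rw [mul_assoc, hq.one_sub.isIdempotentElem.eq, mul_sub, hp.isIdempotentElem.eq, mul_sub,
        mul_one]
    exact DFunLike.congr_fun this x
  have hpx' : (1 - p) ((p - q) x) = -((1 - p) * q) (q x) := by
    have : (1 - p) * (p - q) = -((1 - p) * q) * q := by
      rw [neg_mul, mul_assoc, hq.isIdempotentElem.eq, mul_sub, hp.isIdempotentElem.one_sub_mul_self,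
        zero_sub]
    exact DFunLike.congr_fun this x
  refine (pow_le_pow_iff_left₀ (norm_nonneg _) (by positivity) two_ne_zero).mp ?_
  calc ‖(p - q) x‖ ^ 2 = ‖(p * (1 - q)) ((1 - q) x)‖ ^ 2 + ‖((1 - p) * q) (q x)‖ ^ 2 := by
        rw [← norm_apply_sq_add_norm_one_sub_apply_sq hp, hpx, hpx', norm_neg]
    _ ≤ (k * ‖(1 - q) x‖) ^ 2 + (k * ‖q x‖) ^ 2 := by
        gcongr
        exacts [ContinuousLinearMap.le_of_opNorm_le _ h₁ _,
          ContinuousLinearMap.le_of_opNorm_le _ h₂ _]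
    _ = (k * ‖x‖) ^ 2 := by
        rw [mul_pow, mul_pow, mul_pow, ← norm_apply_sq_add_norm_one_sub_apply_sq hq x]
        ring

variable {ι : Type*} [Fintype ι] {P : ι → H →L[ℂ] H}

lemma norm_sum_apply_sq (hP : OrthogonalIdempotents P) (hPsa : ∀ i, IsSelfAdjoint (P i))
    (y : ι → H) : ‖∑ i, P i (y i)‖ ^ 2 = ∑ i, ‖P i (y i)‖ ^ 2 := by
  have horth : OrthogonalFamily ℂ (fun i => (P i).range) fun i => (P i).range.subtypeₗᵢ := by
    rintro i j hij ⟨_, u, rfl⟩ ⟨_, v, rfl⟩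
    change inner ℂ (P i u) (P j v) = 0
    have hzero : P i (P j v) = 0 := DFunLike.congr_fun (hP.ortho hij) v
    exact ((hPsa i).isSymmetric u (P j v)).trans (by simp [hzero])
  exact horth.norm_sum (fun i => ⟨P i (y i), y i, rfl⟩) Finset.univ

lemma norm_sum_apply_le (hP : OrthogonalIdempotents P) (hPsa : ∀ i, IsSelfAdjoint (P i))
    {c : ℝ} (hc : 0 ≤ c) {y : ι → H} {x : H} (h : ∀ i, ‖P i (y i)‖ ≤ c * ‖P i x‖) :
    ‖∑ i, P i (y i)‖ ≤ c * ‖x‖ := by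
  have hsum : IsStarProjection (∑ i, P i) :=
    ⟨hP.isIdempotentElem_sum, isSelfAdjoint_sum _ fun i _ => hPsa i⟩
  refine (pow_le_pow_iff_left₀ (norm_nonneg _) (by positivity) two_ne_zero).mp ?_
  calc ‖∑ i, P i (y i)‖ ^ 2 = ∑ i, ‖P i (y i)‖ ^ 2 := norm_sum_apply_sq hP hPsa y
    _ ≤ ∑ i, (c * ‖P i x‖) ^ 2 := by gcongr; exact h _
    _ = c ^ 2 * ‖(∑ i, P i) x‖ ^ 2 := by
      simp only [mul_pow, ← Finset.mul_sum, ← norm_sum_apply_sq hP hPsa, sum_apply]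
    _ ≤ c ^ 2 * ‖x‖ ^ 2 := by
      gcongr
      simpa using ContinuousLinearMap.le_of_opNorm_le _ hsum.norm_le x
    _ = (c * ‖x‖) ^ 2 := (mul_pow ..).symm

lemma norm_sum_smul_le_one (hP : OrthogonalIdempotents P) (hPsa : ∀ i, IsSelfAdjoint (P i))
    {a : ι → ℂ} (ha : ∀ i, ‖a i‖ ≤ 1) : ‖∑ i, a i • P i‖ ≤ 1 := by
  refine ContinuousLinearMap.opNorm_le_bound _ zero_le_one fun x => ?_
  have h := norm_sum_apply_le hP hPsa zero_le_one (y := fun i => a i • x) (x := x) fun i => by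
    rw [map_smul, norm_smul]
    exact mul_le_mul_of_nonneg_right (ha i) (norm_nonneg _)
  simpa only [map_smul, sum_apply, smul_apply] using h

end OrthogonalProjections

open Set in
lemma exists_finite_measurable_partition {S : Set ℝ} (hb : Bornology.IsBounded S)
    (hS : MeasurableSet S) {ε : ℝ} (hε : 0 < ε) :
    ∃ (ι : Type) (_ : Fintype ι) (D : ι → Set ℝ) (a : ι → ℝ), (∀ i, MeasurableSet (D i)) ∧
      Pairwise (Function.onFun Disjoint D) ∧ ⋃ i, D i = S ∧
      ∀ i, a i ∈ D i ∧ D i ⊆ Metric.closedBall (a i) ε := by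
  let f : ℝ → ℤ := fun s => ⌊s / ε⌋
  have hfin : (f '' S).Finite := by
    obtain ⟨M, hM⟩ := hb.subset_closedBall 0
    refine (finite_Icc ⌊-M / ε⌋ ⌊M / ε⌋).subset ?_
    rintro _ ⟨s, hs, rfl⟩
    have hsM : |s| ≤ M := by simpa using hM hs
    constructor <;> refine Int.floor_le_floor (by gcongr; linarith [abs_le.mp hsM])
  have hmem (i : f '' S) : ∃ s ∈ S, f s = i := i.2
  choose a ha hfa using hmem
  refine ⟨f '' S, hfin.fintype, fun i => S ∩ f ⁻¹' {i.1}, a,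
    fun i => hS.inter (measurableSet_preimage (by fun_prop) (measurableSet_singleton _)), ?_, ?_,
    fun i => ⟨⟨ha i, hfa i⟩, fun s hs => ?_⟩⟩
  · intro i j hij
    refine disjoint_left.mpr fun s hi hj => hij (Subtype.ext ?_)
    exact hi.2.symm.trans hj.2
  · ext s
    simp only [mem_iUnion, mem_inter_iff]
    exact ⟨fun ⟨_, hs, _⟩ => hs, fun hs => ⟨⟨f s, mem_image_of_mem f hs⟩, hs, rfl⟩⟩
  · have h := Int.abs_sub_lt_one_of_floor_eq_floor (hs.2.trans (hfa i).symm)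
    rw [← sub_div, abs_div, abs_of_pos hε, div_lt_one hε] at h
    exact h.le

namespace IsSpectralMeasure

open MeasureTheory Set
open scoped Pointwise

variable {H : Type*} [NormedAddCommGroup H] [InnerProductSpace ℂ H] [CompleteSpace H]
  {T : H →L[ℂ] H} {E : Set ℝ → H →L[ℂ] H} {Δ Δ₁ Δ₂ : Set ℝ}

lemma map_empty (hE : IsSpectralMeasure T E) : E ∅ = 0 := by
  ext x
  have h := (hE.countably_additive (fun _ => ∅) (fun _ => .empty)
    (fun _ _ _ => disjoint_bot_left) x).summable
  simpa using (summable_const_iff (β := ℕ) _).mp h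

open scoped Classical in
/-- The `H`-valued measure `Δ ↦ E Δ x`, through which the additivity of `E` is read off from the
theory of vector measures. By the convention of `VectorMeasure` it vanishes on nonmeasurable sets,
where `E` itself is arbitrary. -/
noncomputable def vectorMeasure (hE : IsSpectralMeasure T E) (x : H) : VectorMeasure ℝ H where
  measureOf' Δ := if MeasurableSet Δ then E Δ x else 0
  empty' := by simp [hE.map_empty]
  not_measurable' _ hΔ := if_neg hΔ
  m_iUnion' Δ hΔ hdisj := by
    simpa only [hΔ, MeasurableSet.iUnion hΔ, if_true] using hE.countably_additive Δ hΔ hdisj x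

lemma vectorMeasure_apply (hE : IsSpectralMeasure T E) (hΔ : MeasurableSet Δ) (x : H) :
    hE.vectorMeasure x Δ = E Δ x :=
  if_pos hΔ

lemma map_union (hE : IsSpectralMeasure T E) (h₁ : MeasurableSet Δ₁) (h₂ : MeasurableSet Δ₂)
    (hdisj : Disjoint Δ₁ Δ₂) : E (Δ₁ ∪ Δ₂) = E Δ₁ + E Δ₂ := by
  ext x
  simpa only [hE.vectorMeasure_apply, h₁, h₂, h₁.union h₂, add_apply] using
    (hE.vectorMeasure x).of_union hdisj h₁ h₂

lemma map_iUnion {ι : Type*} [Fintype ι] (hE : IsSpectralMeasure T E) {D : ι → Set ℝ}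
    (hD : ∀ i, MeasurableSet (D i)) (hdisj : Pairwise (Function.onFun Disjoint D)) :
    E (⋃ i, D i) = ∑ i, E (D i) := by
  ext x
  have h := (hE.vectorMeasure x).of_disjoint_iUnion hD hdisj
  simpa only [hE.vectorMeasure_apply, hD, MeasurableSet.iUnion hD, tsum_fintype, sum_apply] using h

lemma map_compl (hE : IsSpectralMeasure T E) (hΔ : MeasurableSet Δ) : E Δᶜ = 1 - E Δ := by
  rw [eq_sub_iff_add_eq', ← hE.map_union hΔ hΔ.compl disjoint_compl_right, union_compl_self,
    hE.map_univ]

lemma isStarProjection (hE : IsSpectralMeasure T E) (hΔ : MeasurableSet Δ) :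
    IsStarProjection (E Δ) :=
  ⟨by rw [IsIdempotentElem, hE.map_inter Δ Δ hΔ hΔ, inter_self], hE.isSelfAdjoint Δ hΔ⟩

lemma apply_inter_of_apply_eq (hE : IsSpectralMeasure T E) (h₁ : MeasurableSet Δ₁)
    (h₂ : MeasurableSet Δ₂) {x : H} (hx : E Δ₁ x = x) : E (Δ₁ ∩ Δ₂) (E Δ₂ x) = E Δ₂ x := by
  have hinter : E Δ₂ x = E (Δ₁ ∩ Δ₂) x := by
    rw [inter_comm, ← hE.map_inter _ _ h₂ h₁, mul_apply_eq_comp, hx]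
  rw [hinter]
  exact DFunLike.congr_fun (hE.isStarProjection (h₁.inter h₂)).isIdempotentElem x

lemma mul_of_subset (hE : IsSpectralMeasure T E) (h₁ : MeasurableSet Δ₁)
    (h₂ : MeasurableSet Δ₂) (hsub : Δ₁ ⊆ Δ₂) : E Δ₁ * E Δ₂ = E Δ₁ := by
  rw [hE.map_inter _ _ h₁ h₂, inter_eq_self_of_subset_left hsub]

lemma eq_zero_of_subset (hE : IsSpectralMeasure T E) (h₁ : MeasurableSet Δ₁)
    (h₂ : MeasurableSet Δ₂) (hsub : Δ₁ ⊆ Δ₂) (hzero : E Δ₂ = 0) : E Δ₁ = 0 := by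
  rw [← hE.mul_of_subset h₁ h₂ hsub, hzero, mul_zero]

lemma iUnion_eq_zero (hE : IsSpectralMeasure T E) {D : ℕ → Set ℝ}
    (hD : ∀ n, MeasurableSet (D n)) (hzero : ∀ n, E (D n) = 0) : E (⋃ n, D n) = 0 := by
  have hdisj (n : ℕ) : E (disjointed D n) = 0 :=
    hE.eq_zero_of_subset (.disjointed hD n) (hD n) (disjointed_subset D n) (hzero n)
  ext x
  have h := hE.countably_additive _ (.disjointed hD) (disjoint_disjointed D) x
  simp only [iUnion_disjointed, hdisj, zero_apply] at h
  exact h.unique hasSum_zero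

lemma orthogonalIdempotents {ι : Type*} (hE : IsSpectralMeasure T E) {D : ι → Set ℝ}
    (hD : ∀ i, MeasurableSet (D i)) (hdisj : Pairwise (Function.onFun Disjoint D)) :
    OrthogonalIdempotents fun i => E (D i) where
  idem i := (hE.isStarProjection (hD i)).isIdempotentElem
  ortho i j hij := by
    simp only [hE.map_inter _ _ (hD i) (hD j), (hdisj hij).inter_eq, hE.map_empty]

lemma commute_apply (hE : IsSpectralMeasure T E) (hΔ : MeasurableSet Δ) (x : H) :
    T (E Δ x) = E Δ (T x) :=
  DFunLike.congr_fun (hE.commutes Δ hΔ).eq x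

lemma neg (hE : IsSpectralMeasure T E) : IsSpectralMeasure (-T) fun Δ => E (-Δ) where
  isSelfAdjoint Δ hΔ := hE.isSelfAdjoint _ hΔ.neg
  map_inter Δ₁ Δ₂ h₁ h₂ := by rw [hE.map_inter _ _ h₁.neg h₂.neg, ← Set.inter_neg]
  map_univ := by rw [neg_univ, hE.map_univ]
  countably_additive D hD hdisj x := by
    simp only [iUnion_neg]
    exact hE.countably_additive _ (fun n => (hD n).neg)
      (fun i j hij => (hdisj hij).preimage _) x
  commutes Δ hΔ := (hE.commutes _ hΔ.neg).neg_left
  spectrum_loc Δ hΔ x hx μ := by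
    have hdist : Metric.infDist (-μ) (-Δ) = Metric.infDist μ Δ := by
      rw [← image_neg_eq_neg]
      exact Metric.infDist_image (IsometryEquiv.neg ℝ).isometry
    have h := hE.spectrum_loc (-Δ) hΔ.neg x hx (-μ)
    rw [hdist] at h
    rwa [neg_apply, ← norm_neg (-T x - _), neg_sub', neg_neg, ← neg_smul, ← Complex.ofReal_neg]

lemma exists_spectrum_subset_closure (hE : IsSpectralMeasure T E) (hT : IsSelfAdjoint T)
    (hΔ : MeasurableSet Δ) (hne : Δ.Nonempty) :
    ∃ S : H →L[ℂ] H, IsSelfAdjoint S ∧ spectrum ℝ S ⊆ closure Δ ∧ ∀ x, E Δ x = x → S x = T x := by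
  obtain ⟨c, hc⟩ := hne
  have hp := hE.isStarProjection hΔ
  have hcomm : Commute (T * E Δ + c • (1 - E Δ)) (E Δ) :=
    ((hE.commutes Δ hΔ).mul_left (.refl _)).add_left
      ((((Commute.one_left _).sub_left (.refl _))).smul_left c)
  have hself : IsSelfAdjoint (T * E Δ + c • (1 - E Δ)) :=
    ((hT.commute_iff hp.isSelfAdjoint).mp (hE.commutes Δ hΔ)).add
      ((IsSelfAdjoint.all c).smul hp.one_sub.isSelfAdjoint)
  refine ⟨_, hself, fun μ hμ => ?_, fun x hx => by simp [hx]⟩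
  by_contra hclosure
  have hpos := (Metric.infDist_pos_iff_notMem_closure ⟨c, hc⟩).mp hclosure
  refine notMem_spectrum_of_bounded_below hself hpos (fun x => ?_) hμ
  rw [← sub_algebraMap_apply]
  have hpp : E Δ (E Δ x) = E Δ x := DFunLike.congr_fun hp.isIdempotentElem x
  refine mul_norm_le_norm_apply_of_commute hp
    (hcomm.sub_left (Algebra.commutes μ _)) hpos.le ?_ ?_
  · simpa [sub_algebraMap_apply, hpp] using hE.spectrum_loc Δ hΔ _ hpp μ
  · have : (T * E Δ + c • (1 - E Δ) - algebraMap ℝ (H →L[ℂ] H) μ) ((1 - E Δ) x)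
        = (c - μ) • (1 - E Δ) x := by
      simp [sub_smul, hpp]
    rw [this, norm_smul, Real.norm_eq_abs, ← Real.dist_eq, dist_comm]
    gcongr
    exact Metric.infDist_le_dist_of_mem hc

lemma norm_apply_sub_smul_le (hE : IsSpectralMeasure T E) (hT : IsSelfAdjoint T)
    (hΔ : MeasurableSet Δ) {c h : ℝ} (hh : 0 ≤ h) (hs : Δ ⊆ Metric.closedBall c h) {x : H}
    (hx : E Δ x = x) : ‖T x - c • x‖ ≤ h * ‖x‖ := by
  rcases Δ.eq_empty_or_nonempty with rfl | hne
  · simp [show x = 0 by rw [← hx, hE.map_empty, zero_apply]]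
  obtain ⟨S, hS, hspec, hST⟩ := hE.exists_spectrum_subset_closure hT hΔ hne
  rw [← hST x hx]
  exact norm_apply_sub_smul_le_of_spectrum hS hh
    (hspec.trans (closure_minimal hs Metric.isClosed_closedBall)) x

lemma ball_eq_zero_of_bounded_below (hE : IsSpectralMeasure T E) (hT : IsSelfAdjoint T) {l c : ℝ}
    (hc : 0 < c) (hb : ∀ x, c * ‖x‖ ≤ ‖T x - l • x‖) : E (Metric.ball l (c / 2)) = 0 := by
  ext x
  have hup := hE.norm_apply_sub_smul_le hT measurableSet_ball (c := l) (half_pos hc).le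
    Metric.ball_subset_closedBall (x := E (Metric.ball l (c / 2)) x)
    (DFunLike.congr_fun (hE.isStarProjection measurableSet_ball).isIdempotentElem x)
  have hlow := hb (E (Metric.ball l (c / 2)) x)
  exact norm_le_zero_iff.mp (by nlinarith)

lemma compl_spectrum_eq_zero (hE : IsSpectralMeasure T E) (hT : IsSelfAdjoint T) :
    E (spectrum ℝ T)ᶜ = 0 := by
  have hball (l : ℝ) (hl : l ∈ (spectrum ℝ T)ᶜ) : ∃ r > 0, E (Metric.ball l r) = 0 := by
    obtain ⟨c, hc, hb⟩ := exists_bounded_below_of_notMem_spectrum hl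
    exact ⟨c / 2, half_pos hc, hE.ball_eq_zero_of_bounded_below hT hc hb⟩
  rcases (spectrum ℝ T)ᶜ.eq_empty_or_nonempty with hempty | hne
  · rw [hempty, hE.map_empty]
  choose! r hr hzero using hball
  obtain ⟨t, hts, htc, hcover⟩ := TopologicalSpace.countable_cover_nhdsWithin
    fun l hl => mem_nhdsWithin_of_mem_nhds (Metric.ball_mem_nhds l (hr l hl))
  obtain ⟨i, hi, -⟩ := nonempty_biUnion.mp (hne.mono hcover)
  obtain ⟨g, rfl⟩ := htc.exists_eq_range ⟨i, hi⟩
  rw [biUnion_range] at hcover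
  exact hE.eq_zero_of_subset (spectrum.isClosed T).measurableSet.compl
    (.iUnion fun n => measurableSet_ball) hcover
    (hE.iUnion_eq_zero (fun n => measurableSet_ball) fun n => hzero _ (hts (mem_range_self n)))

lemma inter_spectrum (hE : IsSpectralMeasure T E) (hT : IsSelfAdjoint T) (hΔ : MeasurableSet Δ) :
    E (Δ ∩ spectrum ℝ T) = E Δ := by
  have hone : E (spectrum ℝ T) = 1 := by
    simpa [hE.compl_spectrum_eq_zero hT] using
      hE.map_compl (spectrum.isClosed T).measurableSet.compl
  rw [← hE.map_inter _ _ hΔ (spectrum.isClosed T).measurableSet, hone, mul_one]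

lemma mul_norm_sq_le_re_inner (hE : IsSpectralMeasure T E) (hT : IsSelfAdjoint T)
    (hΔ : MeasurableSet Δ) {m : ℝ} (hm : ∀ s ∈ Δ ∩ spectrum ℝ T, m ≤ s) {x : H} (hx : E Δ x = x) :
    m * ‖x‖ ^ 2 ≤ (inner ℂ (T x) x).re := by
  rw [← hE.inter_spectrum hT hΔ] at hx
  rcases (Δ ∩ spectrum ℝ T).eq_empty_or_nonempty with hempty | hne
  · simp [show x = 0 by rw [← hx, hempty, hE.map_empty, zero_apply]]
  obtain ⟨S, hS, hspec, hST⟩ := hE.exists_spectrum_subset_closure hT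
    (hΔ.inter (spectrum.isClosed T).measurableSet) hne
  rw [← hST x hx]
  exact mul_norm_sq_le_re_inner_of_spectrum hS
    (hspec.trans (closure_minimal hm isClosed_Ici)) x

lemma exists_diagonal_approx (hE : IsSpectralMeasure T E) (hT : IsSelfAdjoint T)
    (hΔ : MeasurableSet Δ) (hb : Bornology.IsBounded Δ) {ε : ℝ} (hε : 0 < ε) :
    ∃ (ι : Type) (_ : Fintype ι) (P : ι → H →L[ℂ] H) (a : ι → ℝ), OrthogonalIdempotents P ∧
      (∀ i, IsSelfAdjoint (P i)) ∧ ∑ i, P i = E Δ ∧ (∀ i, a i ∈ Δ) ∧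
      ‖T * E Δ - ∑ i, a i • P i‖ ≤ ε := by
  obtain ⟨ι, _, D, a, hD, hdisj, rfl, ha⟩ := exists_finite_measurable_partition hb hΔ hε
  have hP := hE.orthogonalIdempotents hD hdisj
  have hPsa (i : ι) : IsSelfAdjoint (E (D i)) := hE.isSelfAdjoint _ (hD i)
  refine ⟨ι, inferInstance, fun i => E (D i), a, hP, hPsa, (hE.map_iUnion hD hdisj).symm,
    fun i => mem_iUnion_of_mem i (ha i).1,
    ContinuousLinearMap.opNorm_le_bound _ hε.le fun x => ?_⟩
  have hpp (i : ι) : E (D i) (E (D i) x) = E (D i) x := DFunLike.congr_fun (hP.idem i) x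
  have hsum : (T * E (⋃ i, D i) - ∑ i, a i • E (D i)) x
      = ∑ i, E (D i) (T x - a i • x) := by
    simp [hE.map_iUnion hD hdisj, hE.commute_apply (hD _)]
  rw [hsum]
  refine norm_sum_apply_le hP hPsa hε.le fun i => ?_
  have h := hE.norm_apply_sub_smul_le hT (hD i) hε.le (ha i).2 (hpp i)
  rw [hE.commute_apply (hD i)] at h
  rwa [map_sub, ContinuousLinearMap.map_smul_of_tower]

end IsSpectralMeasure

section DiagonalSums

variable {𝕜 R ι κ : Type*} [Fintype ι] [Fintype κ] [CommRing 𝕜] [Ring R] [Algebra 𝕜 R]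
  {P : ι → R} {Q : κ → R}

lemma sum_smul_mul_sum_smul (hP : OrthogonalIdempotents P) (f a : ι → 𝕜) :
    (∑ i, f i • P i) * ∑ i, a i • P i = ∑ i, (f i * a i) • P i := by
  classical
  simp [Finset.sum_mul_sum, hP.mul_eq, smul_smul, mul_comm]

lemma sum_smul_mul_mul_sum_smul (P : ι → R) (Q : κ → R) (f : ι → 𝕜) (g : κ → 𝕜) (X : R) :
    (∑ i, f i • P i) * X * ∑ k, g k • Q k
      = ∑ p : ι × κ, (f p.1 * g p.2) • (P p.1 * X * Q p.2) := by
  rw [Finset.sum_mul, Finset.sum_mul_sum, Fintype.sum_prod_type]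
  simp only [smul_mul_assoc _ _ X, smul_mul_smul_comm]

lemma sum_smul_mul_sylvester_mul_sum_smul (hP : OrthogonalIdempotents P)
    (hQ : OrthogonalIdempotents Q) (f a : ι → 𝕜) (g b : κ → 𝕜) (X : R) :
    (∑ i, f i • P i) * ((∑ i, a i • P i) * X - X * ∑ k, b k • Q k) * ∑ k, g k • Q k
      = ∑ p : ι × κ, (f p.1 * g p.2) • (a p.1 - b p.2) • (P p.1 * X * Q p.2) := by
  calc _ = ((∑ i, f i • P i) * ∑ i, a i • P i) * X * (∑ k, g k • Q k)
        - (∑ i, f i • P i) * X * ((∑ k, b k • Q k) * ∑ k, g k • Q k) := by noncomm_ring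
    _ = _ := by
      rw [sum_smul_mul_sum_smul hP, sum_smul_mul_sum_smul hQ, sum_smul_mul_mul_sum_smul,
        sum_smul_mul_mul_sum_smul, ← Finset.sum_sub_distrib]
      refine Finset.sum_congr rfl fun p _ => ?_
      rw [← sub_smul, smul_smul]
      ring_nf

end DiagonalSums

section Sylvester

variable {H : Type*} [NormedAddCommGroup H] [InnerProductSpace ℂ H] [CompleteSpace H]

theorem norm_le_of_diagonal_sylvester {ι κ : Type*} [Fintype ι] [Fintype κ]
    {P : ι → H →L[ℂ] H} {Q : κ → H →L[ℂ] H} (hP : OrthogonalIdempotents P)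
    (hPsa : ∀ i, IsSelfAdjoint (P i)) (hQ : OrthogonalIdempotents Q)
    (hQsa : ∀ k, IsSelfAdjoint (Q k)) {a : ι → ℝ} {b : κ → ℝ} {D : ℝ} (hD : 0 < D)
    (hsep : ∀ i k, D ≤ |a i - b k|) {X : H →L[ℂ] H} (hX : (∑ i, P i) * X * (∑ k, Q k) = X) :
    ‖X‖ ≤ π / 2 * (‖(∑ i, a i • P i) * X - X * ∑ k, b k • Q k‖ / D) := by
  have hexp (r : ℝ) : ‖Complex.exp (r * Complex.I)‖ ≤ 1 := (Complex.norm_exp_ofReal_mul_I r).le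
  have hsum : X = ∑ p : ι × κ, P p.1 * X * Q p.2 := by
    simpa [hX] using sum_smul_mul_mul_sum_smul P Q (1 : ι → ℂ) (1 : κ → ℂ) X
  rw [hsum]
  refine norm_sum_le_of_norm_sum_cexp_smul_le (l := fun p : ι × κ => (a p.1 - b p.2) / D)
    (fun p => ?_) fun t => ?_
  · rw [abs_div, abs_of_pos hD, one_le_div hD]
    exact hsep _ _
  rw [← hsum]
  set U := ∑ i, Complex.exp ((t * a i / D : ℝ) * Complex.I) • P i
  set W := ∑ k, Complex.exp ((-(t * b k / D) : ℝ) * Complex.I) • Q k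
  set Y := (∑ i, a i • P i) * X - X * ∑ k, b k • Q k with hY
  have hfactor : ∑ p : ι × κ, Complex.exp (t * ((a p.1 - b p.2) / D : ℝ) * Complex.I) •
      (((a p.1 - b p.2) / D : ℝ) : ℂ) • (P p.1 * X * Q p.2) = (D⁻¹ : ℂ) • (U * Y * W) := by
    have hcoe : Y = (∑ i, (a i : ℂ) • P i) * X - X * ∑ k, (b k : ℂ) • Q k := hY
    rw [hcoe, sum_smul_mul_sylvester_mul_sum_smul hP hQ, Finset.smul_sum]
    refine Finset.sum_congr rfl fun p _ => ?_
    rw [← Complex.exp_add, smul_smul, smul_smul, smul_smul]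
    push_cast
    ring_nf
  rw [hfactor, norm_smul, norm_inv, Complex.norm_real, Real.norm_of_nonneg hD.le, inv_mul_eq_div]
  gcongr
  calc ‖U * Y * W‖ ≤ ‖U‖ * ‖Y‖ * ‖W‖ := norm_mul₃_le
    _ ≤ 1 * ‖Y‖ * 1 := by
      gcongr
      exacts [norm_sum_smul_le_one hP hPsa fun i => hexp _,
        norm_sum_smul_le_one hQ hQsa fun k => hexp _]
    _ = ‖Y‖ := by ring

end Sylvester

section SpectralSubspaces

open Set

variable {H : Type*} [NormedAddCommGroup H] [InnerProductSpace ℂ H] [CompleteSpace H]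
  {A B : H →L[ℂ] H} {EA EB : Set ℝ → H →L[ℂ] H} {S₁ S₂ : Set ℝ} {D : ℝ}

lemma norm_sylvester_le {p q A' B' : H →L[ℂ] H} {ε : ℝ} (hp : IsStarProjection p)
    (hq : IsStarProjection q) (hAp : Commute A p) (hBq : Commute B q) (hA' : ‖A * p - A'‖ ≤ ε)
    (hB' : ‖B * q - B'‖ ≤ ε) : ‖A' * (p * q) - p * q * B'‖ ≤ ‖A - B‖ + 2 * ε := by
  have hsplit : A' * (p * q) - p * q * B'
      = p * (A - B) * q - (A * p - A') * p * q + p * q * (B * q - B') := by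
    have hpAq : p * A * q = A * p * p * q := by
      rw [← hAp.eq, mul_assoc A p p, hp.isIdempotentElem.eq]
    have hpBq : p * q * (B * q) = p * B * q := by
      rw [mul_assoc p q, ← mul_assoc q B, ← hBq.eq, mul_assoc B, hq.isIdempotentElem.eq, mul_assoc]
    rw [mul_sub (p * q), hpBq, mul_sub p, sub_mul (p * A), hpAq]
    noncomm_ring
  have hp_norm := hp.norm_le
  have hq_norm := hq.norm_le
  have hε : 0 ≤ ε := (norm_nonneg _).trans hA'
  calc _ ≤ ‖p‖ * ‖A - B‖ * ‖q‖ + ‖A * p - A'‖ * ‖p‖ * ‖q‖ + ‖p‖ * ‖q‖ * ‖B * q - B'‖ := by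
        rw [hsplit]
        exact norm_add_le_of_le (norm_sub_le_of_le norm_mul₃_le norm_mul₃_le) norm_mul₃_le
    _ ≤ 1 * ‖A - B‖ * 1 + ε * 1 * 1 + 1 * 1 * ε := by gcongr
    _ = ‖A - B‖ + 2 * ε := by ring

lemma norm_mul_le_of_isBounded_of_le_dist (hA : IsSelfAdjoint A) (hB : IsSelfAdjoint B)
    (hEA : IsSpectralMeasure A EA) (hEB : IsSpectralMeasure B EB) (h₁ : MeasurableSet S₁)
    (h₂ : MeasurableSet S₂) (hb₁ : Bornology.IsBounded S₁) (hb₂ : Bornology.IsBounded S₂)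
    (hD : 0 < D) (hsep : ∀ s ∈ S₁, ∀ t ∈ S₂, D ≤ dist s t) :
    ‖EA S₁ * EB S₂‖ ≤ π / 2 * (‖A - B‖ / D) := by
  have hε (ε : ℝ) (hε : 0 < ε) : ‖EA S₁ * EB S₂‖ ≤ π / 2 * ((‖A - B‖ + 2 * ε) / D) := by
    obtain ⟨ι, _, P, a, hP, hPsa, hPsum, ha, hPa⟩ := hEA.exists_diagonal_approx hA h₁ hb₁ hε
    obtain ⟨κ, _, Q, b, hQ, hQsa, hQsum, hb, hQb⟩ := hEB.exists_diagonal_approx hB h₂ hb₂ hε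
    have hp := hEA.isStarProjection h₁
    have hq := hEB.isStarProjection h₂
    have hX : (∑ i, P i) * (EA S₁ * EB S₂) * ∑ k, Q k = EA S₁ * EB S₂ := by
      rw [hPsum, hQsum, ← mul_assoc, hp.isIdempotentElem.eq, mul_assoc, hq.isIdempotentElem.eq]
    refine (norm_le_of_diagonal_sylvester hP hPsa hQ hQsa hD
      (fun i k => hsep _ (ha i) _ (hb k)) hX).trans ?_
    gcongr
    exact norm_sylvester_le hp hq (hEA.commutes _ h₁) (hEB.commutes _ h₂) hPa hQb
  have hlim : Filter.Tendsto (fun ε : ℝ => π / 2 * ((‖A - B‖ + 2 * ε) / D)) (nhdsWithin 0 (Ioi 0))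
      (nhds (π / 2 * ((‖A - B‖ + 2 * 0) / D))) :=
    (Continuous.tendsto (by fun_prop) 0).mono_left nhdsWithin_le_nhds
  rw [mul_zero, add_zero] at hlim
  exact ge_of_tendsto hlim (Filter.eventually_of_mem self_mem_nhdsWithin hε)

theorem norm_mul_le_of_le_dist (hA : IsSelfAdjoint A) (hB : IsSelfAdjoint B)
    (hEA : IsSpectralMeasure A EA) (hEB : IsSpectralMeasure B EB) (h₁ : MeasurableSet S₁)
    (h₂ : MeasurableSet S₂) (hD : 0 < D)
    (hsep : ∀ s ∈ S₁ ∩ spectrum ℝ A, ∀ t ∈ S₂ ∩ spectrum ℝ B, D ≤ dist s t) :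
    ‖EA S₁ * EB S₂‖ ≤ π / 2 * (‖A - B‖ / D) := by
  rw [← hEA.inter_spectrum hA h₁, ← hEB.inter_spectrum hB h₂]
  exact norm_mul_le_of_isBounded_of_le_dist hA hB hEA hEB
    (h₁.inter (spectrum.isClosed A).measurableSet) (h₂.inter (spectrum.isClosed B).measurableSet)
    ((spectrum.isBounded A).subset inter_subset_right)
    ((spectrum.isBounded B).subset inter_subset_right) hD hsep

end SpectralSubspaces

section QuadraticForms

variable {H : Type*} [NormedAddCommGroup H] [InnerProductSpace ℂ H]

lemma two_mul_mul_mul_le_of_sq_le_mul {α β v : ℝ} (hα : 0 ≤ α) (hβ : 0 ≤ β) (hv : v ^ 2 ≤ α * β)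
    (y z : ℝ) : 2 * (v * y * z) ≤ α * y ^ 2 + β * z ^ 2 := by
  refine (le_abs_self _).trans (abs_le_of_sq_le_sq ?_ (by positivity))
  nlinarith [mul_le_mul_of_nonneg_right hv (sq_nonneg (y * z)), sq_nonneg (α * y ^ 2 - β * z ^ 2)]

variable [CompleteSpace H] {p S T V : H →L[ℂ] H}

lemma inner_apply_eq_add_of_commute (hp : IsStarProjection p) (hT : Commute T p) (x : H) :
    inner ℂ (T x) x = inner ℂ (T (p x)) (p x) + inner ℂ (T ((1 - p) x)) ((1 - p) x) := by
  have hTp : T (p x) = p (T x) := DFunLike.congr_fun hT.eq x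
  have hTq : T ((1 - p) x) = (1 - p) (T x) :=
    DFunLike.congr_fun ((Commute.one_right T).sub_right hT).eq x
  have hsum (y : H) : p y + (1 - p) y = y := by simp
  have hqp : inner ℂ ((1 - p) (T x)) (p x) = 0 := by
    simpa only [sub_sub_cancel] using inner_apply_one_sub_apply hp.one_sub (T x) x
  calc inner ℂ (T x) x = inner ℂ (p (T x) + (1 - p) (T x)) (p x + (1 - p) x) := by rw [hsum, hsum]
    _ = _ := by
      rw [inner_add_left, inner_add_right, inner_add_right, inner_apply_one_sub_apply hp, hqp,
        hTp, hTq, add_zero, zero_add]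

lemma inner_apply_apply_eq_zero_of_mul_mul_eq_zero (hp : IsSelfAdjoint p) (hV : p * V * p = 0)
    (x : H) : inner ℂ (V (p x)) (p x) = 0 := by
  have hzero : p (V (p x)) = 0 := DFunLike.congr_fun hV x
  exact (hp.isSymmetric _ x).symm.trans ((congrArg (inner ℂ · x) hzero).trans (inner_zero_left x))

lemma neg_le_re_inner_of_offDiagonal (hp : IsSelfAdjoint p) (hV₁ : p * V * p = 0)
    (hV₂ : (1 - p) * V * (1 - p) = 0) (x : H) :
    -(2 * (‖V‖ * ‖p x‖ * ‖(1 - p) x‖)) ≤ (inner ℂ (V x) x).re := by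
  have hcross (y z : H) : -(‖V‖ * ‖y‖ * ‖z‖) ≤ (inner ℂ (V y) z).re := by
    refine neg_le_of_abs_le ((Complex.abs_re_le_norm _).trans ((norm_inner_le_norm _ _).trans ?_))
    gcongr
    exact V.le_opNorm y
  have hsum : p x + (1 - p) x = x := by simp
  calc -(2 * (‖V‖ * ‖p x‖ * ‖(1 - p) x‖))
      ≤ (inner ℂ (V (p x)) ((1 - p) x)).re + (inner ℂ (V ((1 - p) x)) (p x)).re := by
        linarith [hcross (p x) ((1 - p) x), hcross ((1 - p) x) (p x)]
    _ = (inner ℂ (V (p x + (1 - p) x)) (p x + (1 - p) x)).re := by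
      rw [map_add, inner_add_left, inner_add_right, inner_add_right,
        inner_apply_apply_eq_zero_of_mul_mul_eq_zero hp hV₁,
        inner_apply_apply_eq_zero_of_mul_mul_eq_zero ((IsSelfAdjoint.one _).sub hp) hV₂, zero_add,
        add_zero, Complex.add_re]
    _ = _ := by rw [hsum]

lemma mul_norm_sq_le_re_inner_add_of_offDiagonal (hp : IsStarProjection p)
    (hT : Commute T p) (hV₁ : p * V * p = 0) (hV₂ : (1 - p) * V * (1 - p) = 0)
    {a b c : ℝ} {x : H} (ha : a * ‖p x‖ ^ 2 ≤ (inner ℂ (T (p x)) (p x)).re)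
    (hb : b * ‖(1 - p) x‖ ^ 2 ≤ (inner ℂ (T ((1 - p) x)) ((1 - p) x)).re) (hca : c ≤ a)
    (hcb : c ≤ b) (hV : ‖V‖ ^ 2 ≤ (a - c) * (b - c)) :
    c * ‖x‖ ^ 2 ≤ (inner ℂ ((T + V) x) x).re := by
  have hscalar := two_mul_mul_mul_le_of_sq_le_mul (sub_nonneg.mpr hca) (sub_nonneg.mpr hcb) hV
    ‖p x‖ ‖(1 - p) x‖
  have hoff := neg_le_re_inner_of_offDiagonal hp.isSelfAdjoint hV₁ hV₂ x
  rw [← norm_apply_sq_add_norm_one_sub_apply_sq hp x, add_apply, inner_add_left,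
    inner_apply_eq_add_of_commute hp hT, Complex.add_re, Complex.add_re]
  linarith

lemma mul_norm_add_le_norm_apply_of_indefinite (hS : IsSelfAdjoint S) {c : ℝ} {y z : H}
    (hyz : inner ℂ y z = 0) (hy : (inner ℂ (S y) y).re ≤ -(c * ‖y‖ ^ 2))
    (hz : c * ‖z‖ ^ 2 ≤ (inner ℂ (S z) z).re) : c * ‖y + z‖ ≤ ‖S (y + z)‖ := by
  have hsq : ‖y + z‖ ^ 2 = ‖y‖ ^ 2 + ‖z‖ ^ 2 := by
    simpa only [sq] using norm_add_sq_eq_norm_sq_add_norm_sq_of_inner_eq_zero y z hyz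
  have hnorm : ‖z - y‖ = ‖y + z‖ := by
    rw [norm_sub_eq_norm_add hyz, add_comm]
  have hcross : (inner ℂ (S y) z).re = (inner ℂ (S z) y).re := by
    rw [← inner_conj_symm, Complex.conj_re]
    exact congrArg Complex.re (hS.isSymmetric z y).symm
  have hmul : c * ‖y + z‖ * ‖y + z‖ ≤ ‖S (y + z)‖ * ‖y + z‖ := by
    calc c * ‖y + z‖ * ‖y + z‖ = c * ‖y‖ ^ 2 + c * ‖z‖ ^ 2 := by rw [mul_assoc, ← sq, hsq]; ring
      _ ≤ (inner ℂ (S (y + z)) (z - y)).re := by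
        simp only [map_add, inner_add_left, inner_sub_right, Complex.add_re, Complex.sub_re]
        linarith
      _ ≤ ‖S (y + z)‖ * ‖z - y‖ := re_inner_le_norm (𝕜 := ℂ) _ _
      _ = ‖S (y + z)‖ * ‖y + z‖ := by rw [hnorm]
  rcases (norm_nonneg (y + z)).eq_or_lt with hzero | hpos
  · simp [← hzero]
  · exact le_of_mul_le_mul_right hmul hpos

end QuadraticForms

lemma sub_le_dist_of_mem_cthickening {X : Type*} [PseudoMetricSpace X] {τ : Set X} {s x : X}
    {d δ : ℝ} (hδ : 0 ≤ δ) (hτ : ∀ t ∈ τ, d ≤ dist s t) (hx : x ∈ Metric.cthickening δ τ) :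
    d - δ ≤ dist s x := by
  refine le_of_forall_pos_le_add fun ε hε => ?_
  obtain ⟨t, ht, hxt⟩ := Metric.mem_thickening_iff.mp
    (Metric.cthickening_subset_thickening' (by linarith) (lt_add_of_pos_right δ hε) τ hx)
  linarith [hτ t ht, dist_triangle s x t]

/-- `V` is a perturbation of `T` that is off-diagonal with respect to
`Ran E(σ) ⊕ Ran E(σᶜ)`, where `E` is the spectral measure of `T`, and the part of the spectrum of
`T` outside `σ` has distance at least `d` from `σ`. In this encoding the second spectral component
is `spectrum ℝ T \ σ`, and only a lower bound `d` for the gap is recorded. -/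
structure IsOffDiagonalPerturbation {H : Type*} [NormedAddCommGroup H] [InnerProductSpace ℂ H]
    [CompleteSpace H] (T V : H →L[ℂ] H) (E : Set ℝ → H →L[ℂ] H) (σ : Set ℝ) (d : ℝ) :
    Prop where
  spectralMeasure : IsSpectralMeasure T E
  isSelfAdjoint_left : IsSelfAdjoint T
  isSelfAdjoint_right : IsSelfAdjoint V
  measurableSet : MeasurableSet σ
  mul_mul_eq_zero : E σ * V * E σ = 0
  compl_mul_mul_eq_zero : E σᶜ * V * E σᶜ = 0
  le_dist : ∀ s ∈ σ, ∀ t ∈ spectrum ℝ T \ σ, d ≤ dist s t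

namespace IsOffDiagonalPerturbation

open Set
open scoped Pointwise

variable {H : Type*} [NormedAddCommGroup H] [InnerProductSpace ℂ H] [CompleteSpace H]
  {T V : H →L[ℂ] H} {E EB : Set ℝ → H →L[ℂ] H} {σ I : Set ℝ} {d δ m : ℝ} {x : H}

lemma isSelfAdjoint_add (h : IsOffDiagonalPerturbation T V E σ d) : IsSelfAdjoint (T + V) :=
  h.isSelfAdjoint_left.add h.isSelfAdjoint_right

lemma neg (h : IsOffDiagonalPerturbation T V E σ d) :
    IsOffDiagonalPerturbation (-T) (-V) (fun Δ => E (-Δ)) (-σ) d where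
  spectralMeasure := h.spectralMeasure.neg
  isSelfAdjoint_left := h.isSelfAdjoint_left.neg
  isSelfAdjoint_right := h.isSelfAdjoint_right.neg
  measurableSet := h.measurableSet.neg
  mul_mul_eq_zero := by simp [h.mul_mul_eq_zero]
  compl_mul_mul_eq_zero := by simp [← Set.compl_neg, h.compl_mul_mul_eq_zero]
  le_dist s hs t ht := by
    rw [← spectrum.neg_eq] at ht
    simpa using h.le_dist (-s) hs (-t) ht

lemma forall_le_and_forall_add_le (h : IsOffDiagonalPerturbation T V E σ d)
    (hm : ∀ s ∈ I ∩ spectrum ℝ T, m ≤ s) :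
    (∀ s ∈ I ∩ σ ∩ spectrum ℝ T, m + d ≤ s) ∨ ∀ s ∈ I ∩ σᶜ ∩ spectrum ℝ T, m + d ≤ s := by
  by_contra! hne
  obtain ⟨⟨s, ⟨⟨hsI, hsσ⟩, hs⟩, hsm⟩, t, ⟨⟨htI, htσ⟩, ht⟩, htm⟩ := hne
  have hgap := h.le_dist s hsσ t ⟨ht, htσ⟩
  have hms := hm s ⟨hsI, hs⟩
  have hmt := hm t ⟨htI, ht⟩
  rw [Real.dist_eq, le_abs] at hgap
  rcases hgap with hgap | hgap <;> linarith

lemma mul_norm_sq_le_re_inner (h : IsOffDiagonalPerturbation T V E σ d) (hd : 0 ≤ d) (hδ : 0 ≤ δ)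
    (hV : ‖V‖ ^ 2 ≤ δ * (δ + d)) (hI : MeasurableSet I) (hm : ∀ s ∈ I ∩ spectrum ℝ T, m ≤ s)
    (hx : E I x = x) : (m - δ) * ‖x‖ ^ 2 ≤ (inner ℂ ((T + V) x) x).re := by
  have hE := h.spectralMeasure
  have hT := h.isSelfAdjoint_left
  have hσ := h.measurableSet
  have hform {Δ : Set ℝ} (hΔ : MeasurableSet Δ) {k : ℝ}
      (hk : ∀ s ∈ I ∩ Δ ∩ spectrum ℝ T, k ≤ s) :
      k * ‖E Δ x‖ ^ 2 ≤ (inner ℂ (T (E Δ x)) (E Δ x)).re :=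
    hE.mul_norm_sq_le_re_inner hT (hI.inter hΔ) hk (hE.apply_inter_of_apply_eq hI hΔ hx)
  have hmem {Δ : Set ℝ} (s : ℝ) (hs : s ∈ I ∩ Δ ∩ spectrum ℝ T) : m ≤ s := hm s ⟨hs.1.1, hs.2⟩
  have hcompl := hE.map_compl hσ
  have hV₂ := h.compl_mul_mul_eq_zero
  rw [hcompl] at hV₂
  rcases h.forall_le_and_forall_add_le hm with hσm | hσm
  · refine mul_norm_sq_le_re_inner_add_of_offDiagonal (hE.isStarProjection hσ)
      (hE.commutes σ hσ) h.mul_mul_eq_zero hV₂ (hform hσ hσm) (hcompl ▸ hform hσ.compl hmem)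
      (by linarith) (by linarith) (hV.trans_eq (by ring))
  · refine mul_norm_sq_le_re_inner_add_of_offDiagonal (hE.isStarProjection hσ)
      (hE.commutes σ hσ) h.mul_mul_eq_zero hV₂ (hform hσ hmem) (hcompl ▸ hform hσ.compl hσm)
      (by linarith) (by linarith) (hV.trans_eq (by ring))

lemma re_inner_le_mul_norm_sq (h : IsOffDiagonalPerturbation T V E σ d) (hd : 0 ≤ d) (hδ : 0 ≤ δ)
    (hV : ‖V‖ ^ 2 ≤ δ * (δ + d)) (hI : MeasurableSet I) (hm : ∀ s ∈ I ∩ spectrum ℝ T, s ≤ m)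
    (hx : E I x = x) : (inner ℂ ((T + V) x) x).re ≤ (m + δ) * ‖x‖ ^ 2 := by
  have hneg := h.neg.mul_norm_sq_le_re_inner hd hδ (by rwa [norm_neg]) hI.neg (m := -m)
    (fun s hs => ?_) (x := x) (by rwa [neg_neg])
  · rw [← neg_add, neg_apply, inner_neg_left, Complex.neg_re] at hneg
    linarith
  · rw [← spectrum.neg_eq] at hs
    exact neg_le.mp (hm (-s) hs)

-- Split `x` at `l`: on `Ran E(-∞, l)` the form of `T + V - l` is at most `-(r - δ)`, on
-- `Ran E[l, ∞)` it is at least `r - δ`.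
lemma mul_norm_le_norm_sub_smul (h : IsOffDiagonalPerturbation T V E σ d) (hd : 0 ≤ d)
    (hδ : 0 ≤ δ) (hV : ‖V‖ ^ 2 ≤ δ * (δ + d)) {l r : ℝ} (hr : ∀ s ∈ spectrum ℝ T, r ≤ dist l s)
    (x : H) : (r - δ) * ‖x‖ ≤ ‖(T + V) x - l • x‖ := by
  have hp := h.spectralMeasure.isStarProjection (measurableSet_Iio (a := l))
  have hcompl : E (Ici l) = 1 - E (Iio l) := by
    rw [← h.spectralMeasure.map_compl measurableSet_Iio, compl_Iio]
  have hpx : E (Iio l) (E (Iio l) x) = E (Iio l) x := DFunLike.congr_fun hp.isIdempotentElem x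
  have hqx : E (Ici l) ((1 - E (Iio l)) x) = (1 - E (Iio l)) x := by
    rw [hcompl]
    exact DFunLike.congr_fun hp.one_sub.isIdempotentElem x
  have hform (y : H) : (inner ℂ ((T + V - algebraMap ℝ _ l) y) y).re
      = (inner ℂ ((T + V) y) y).re - l * ‖y‖ ^ 2 := by
    rw [sub_algebraMap_apply, inner_sub_left, Complex.sub_re, RCLike.real_smul_eq_coe_smul (K := ℂ),
      inner_smul_real_left, Complex.smul_re, inner_self_eq_norm_sq_to_K]
    norm_cast
  have hy := h.re_inner_le_mul_norm_sq hd hδ hV measurableSet_Iio (m := l - r)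
    (fun s hs => by
      linarith [hr s hs.2, Real.dist_eq l s, abs_of_pos (sub_pos.mpr (mem_Iio.mp hs.1))]) hpx
  have hz := h.mul_norm_sq_le_re_inner hd hδ hV measurableSet_Ici (m := l + r)
    (fun s hs => by
      linarith [hr s hs.2, Real.dist_eq l s, abs_of_nonpos (sub_nonpos.mpr (mem_Ici.mp hs.1))]) hqx
  have hsum : E (Iio l) x + (1 - E (Iio l)) x = x := by simp
  have hS : IsSelfAdjoint (T + V - algebraMap ℝ (H →L[ℂ] H) l) :=
    h.isSelfAdjoint_add.sub ((IsSelfAdjoint.all l).algebraMap _)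
  rw [← sub_algebraMap_apply, ← hsum]
  refine mul_norm_add_le_norm_apply_of_indefinite hS (inner_apply_one_sub_apply hp x x) ?_ ?_
  · linarith [hform (E (Iio l) x)]
  · linarith [hform ((1 - E (Iio l)) x)]

theorem spectrum_add_subset_cthickening (h : IsOffDiagonalPerturbation T V E σ d) (hd : 0 ≤ d)
    (hδ : 0 ≤ δ) (hV : ‖V‖ ^ 2 ≤ δ * (δ + d)) :
    spectrum ℝ (T + V) ⊆ Metric.cthickening δ (spectrum ℝ T) := by
  intro l hl
  by_contra hfar
  rw [Metric.mem_cthickening_iff, not_le, ENNReal.lt_iff_exists_real_btwn] at hfar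
  obtain ⟨r, -, hδr, hrl⟩ := hfar
  refine notMem_spectrum_of_bounded_below h.isSelfAdjoint_add
    (sub_pos.mpr ((ENNReal.ofReal_lt_ofReal_iff_of_nonneg hδ).mp hδr))
    (h.mul_norm_le_norm_sub_smul hd hδ hV fun s hs => ?_) hl
  have hrs := hrl.le.trans (Metric.infEDist_le_edist_of_mem hs)
  rwa [edist_dist, ENNReal.ofReal_le_ofReal_iff dist_nonneg] at hrs

lemma mem_cthickening_or_mem_cthickening (h : IsOffDiagonalPerturbation T V E σ d) (hd : 0 ≤ d)
    (hδ : 0 ≤ δ) (hV : ‖V‖ ^ 2 ≤ δ * (δ + d)) {l : ℝ} (hl : l ∈ spectrum ℝ (T + V)) :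
    l ∈ Metric.cthickening δ (spectrum ℝ T ∩ σ) ∨ l ∈ Metric.cthickening δ (spectrum ℝ T \ σ) := by
  rw [← mem_union, ← Metric.cthickening_union, inter_union_sdiff]
  exact h.spectrum_add_subset_cthickening hd hδ hV hl

lemma norm_mul_le (h : IsOffDiagonalPerturbation T V E σ d) (hEB : IsSpectralMeasure (T + V) EB)
    {S₁ S₂ : Set ℝ} (h₁ : MeasurableSet S₁) (h₂ : MeasurableSet S₂) {D : ℝ} (hD : 0 < D)
    (hsep : ∀ s ∈ S₁ ∩ spectrum ℝ T, ∀ t ∈ S₂ ∩ spectrum ℝ (T + V), D ≤ dist s t) :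
    ‖E S₁ * EB S₂‖ ≤ π / 2 * (‖V‖ / D) := by
  simpa only [sub_add_cancel_left, norm_neg] using norm_mul_le_of_le_dist h.isSelfAdjoint_left
    h.isSelfAdjoint_add h.spectralMeasure hEB h₁ h₂ hD hsep

lemma norm_mul_compl_thickening_le (h : IsOffDiagonalPerturbation T V E σ d)
    (hEB : IsSpectralMeasure (T + V) EB) (hδ : 0 ≤ δ) (hV : ‖V‖ ^ 2 ≤ δ * (δ + d))
    (hδd : δ < d / 2) :
    ‖E σ * EB (Metric.thickening (d / 2) σ)ᶜ‖ ≤ π / 2 * (‖V‖ / (d - δ)) := by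
  refine h.norm_mul_le hEB h.measurableSet Metric.isOpen_thickening.measurableSet.compl
    (by linarith) fun s hs l hl => ?_
  rcases h.mem_cthickening_or_mem_cthickening (by linarith) hδ hV hl.2 with hnear | hnear
  · exact absurd (Metric.cthickening_subset_thickening' (by linarith) hδd σ
      (Metric.cthickening_subset_of_subset δ inter_subset_right hnear)) hl.1
  · exact sub_le_dist_of_mem_cthickening hδ (h.le_dist s hs.1) hnear

lemma norm_compl_mul_thickening_le (h : IsOffDiagonalPerturbation T V E σ d)
    (hEB : IsSpectralMeasure (T + V) EB) (hδ : 0 ≤ δ) (hV : ‖V‖ ^ 2 ≤ δ * (δ + d))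
    (hδd : δ < d / 2) :
    ‖E σᶜ * EB (Metric.thickening (d / 2) σ)‖ ≤ π / 2 * (‖V‖ / (d - δ)) := by
  refine h.norm_mul_le hEB h.measurableSet.compl Metric.isOpen_thickening.measurableSet
    (by linarith) fun t ht l hl => ?_
  rcases h.mem_cthickening_or_mem_cthickening (by linarith) hδ hV hl.2 with hnear | hnear
  · exact sub_le_dist_of_mem_cthickening hδ
      (fun s hs => (h.le_dist s hs.2 t ⟨ht.2, ht.1⟩).trans_eq (dist_comm s t)) hnear
  · obtain ⟨s, hs, hsl⟩ := Metric.mem_thickening_iff.mp hl.1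
    have hfar := sub_le_dist_of_mem_cthickening hδ (h.le_dist s hs) hnear
    rw [dist_comm] at hsl
    linarith

theorem norm_sub_thickening_le (h : IsOffDiagonalPerturbation T V E σ d)
    (hEB : IsSpectralMeasure (T + V) EB) (hδ : 0 ≤ δ) (hV : ‖V‖ ^ 2 ≤ δ * (δ + d))
    (hδd : δ < d / 2) :
    ‖E σ - EB (Metric.thickening (d / 2) σ)‖ ≤ π / 2 * (‖V‖ / (d - δ)) := by
  have hO := (Metric.isOpen_thickening (δ := d / 2) (E := σ)).measurableSet
  refine norm_sub_le_of_norm_mul_one_sub_le (h.spectralMeasure.isStarProjection h.measurableSet)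
    (hEB.isStarProjection hO) ?_ ?_
  · rw [← hEB.map_compl hO]
    exact h.norm_mul_compl_thickening_le hEB hδ hV hδd
  · rw [← h.spectralMeasure.map_compl h.measurableSet]
    exact h.norm_compl_mul_thickening_le hEB hδ hV hδd

end IsOffDiagonalPerturbation

section Numerics

lemma mul_one_sub_tan_arctan_half_sq (x : ℝ) :
    x * (1 - Real.tan (Real.arctan x / 2) ^ 2) = 2 * Real.tan (Real.arctan x / 2) := by
  have hlt := Real.arctan_lt_pi_div_two x
  have hgt := Real.neg_pi_div_two_lt_arctan x
  have htan_lt : Real.tan (Real.arctan x / 2) < 1 := by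
    rw [← Real.tan_pi_div_four]
    exact Real.tan_lt_tan_of_lt_of_lt_pi_div_two (by linarith) (by linarith [Real.pi_pos])
      (by linarith)
  have htan_gt : -1 < Real.tan (Real.arctan x / 2) := by
    rw [← Real.tan_pi_div_four, ← Real.tan_neg]
    exact Real.tan_lt_tan_of_lt_of_lt_pi_div_two (by linarith [Real.pi_pos]) (by linarith)
      (by linarith)
  have hdouble : x = 2 * Real.tan (Real.arctan x / 2) / (1 - Real.tan (Real.arctan x / 2) ^ 2) := by
    rw [← Real.tan_two_mul, mul_div_cancel₀ _ two_ne_zero, Real.tan_arctan]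
  exact (eq_div_iff (by nlinarith)).mp hdouble

lemma tan_arctan_half_nonneg {x : ℝ} (hx : 0 ≤ x) : 0 ≤ Real.tan (Real.arctan x / 2) :=
  Real.tan_nonneg_of_nonneg_of_le_pi_div_two (by linarith [Real.arctan_nonneg.mpr hx])
    (by linarith [Real.arctan_lt_pi_div_two x, Real.pi_pos])

lemma sq_eq_of_eq_mul_tan_half_arctan {v d δ : ℝ} (hd : d ≠ 0)
    (hδ : δ = v * Real.tan (Real.arctan (2 * v / d) / 2)) : v ^ 2 = δ * (δ + d) := by
  have htan := mul_one_sub_tan_arctan_half_sq (2 * v / d)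
  field_simp at htan
  rw [hδ]
  linear_combination v * htan

-- `(3π ± √(π² + 32)) / (π² - 4)` are the roots of the polynomial in `v / d` on the right.
lemma quadratic_pos_of_lt {v d : ℝ} (hd : 0 < d)
    (hv : v < (3 * π - √(π ^ 2 + 32)) / (π ^ 2 - 4) * d) :
    0 < (π ^ 2 - 4) * v ^ 2 - 6 * π * d * v + 8 * d ^ 2 := by
  have hden : 0 < π ^ 2 - 4 := by nlinarith [Real.pi_gt_three]
  have hroot : √(π ^ 2 + 32) * d < 3 * π * d - (π ^ 2 - 4) * v := by
    rw [div_mul_eq_mul_div, lt_div_iff₀ hden] at hv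
    linarith
  have hsq := pow_lt_pow_left₀ hroot (by positivity) two_ne_zero
  rw [mul_pow, Real.sq_sqrt (by positivity)] at hsq
  refine pos_of_mul_pos_right (a := π ^ 2 - 4) ?_ hden.le
  linarith

lemma pi_mul_lt_two_mul_of_lt {v d : ℝ} (hd : 0 < d)
    (hv : v < (3 * π - √(π ^ 2 + 32)) / (π ^ 2 - 4) * d) : π * v < 2 * d := by
  by_contra! hge
  have hle : 2 * d / π ≤ v := by rwa [div_le_iff₀ Real.pi_pos, mul_comm v]
  have hpos := quadratic_pos_of_lt hd (hle.trans_lt hv)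
  have hvalue : (π ^ 2 - 4) * (2 * d / π) ^ 2 - 6 * π * d * (2 * d / π) + 8 * d ^ 2
      = -(4 * d / π) ^ 2 := by
    field_simp
    ring
  nlinarith [sq_nonneg (4 * d / π)]

lemma pi_div_two_mul_lt_sub_of_lt {v d δ : ℝ} (hd : 0 < d) (hδ : 0 ≤ δ)
    (hvδ : v ^ 2 = δ * (δ + d)) (hv : v < (3 * π - √(π ^ 2 + 32)) / (π ^ 2 - 4) * d) :
    π / 2 * v < d - δ := by
  by_contra! hge
  have hnonneg : 0 ≤ d - π / 2 * v := by linarith [pi_mul_lt_two_mul_of_lt hd hv]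
  have hmono : (d - π / 2 * v) * (d - π / 2 * v + d) ≤ δ * (δ + d) := by
    have : d - π / 2 * v ≤ δ := by linarith
    gcongr
  linarith [quadratic_pos_of_lt hd hv]

lemma lt_half_of_pi_div_two_mul_lt_sub {v d δ : ℝ} (hv : 0 ≤ v) (hd : 0 < d)
    (hvδ : v ^ 2 = δ * (δ + d)) (h : π / 2 * v < d - δ) : δ < d / 2 := by
  by_contra! hge
  have hvd : v ≤ d / 3 := by nlinarith [Real.pi_gt_three]
  have hmono : d / 2 * (d / 2 + d) ≤ δ * (δ + d) := by
    have : 0 ≤ δ := by linarith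
    gcongr
  nlinarith

end Numerics

theorem norm_diff_spectral_projections_lt_one_general
    {H : Type*} [NormedAddCommGroup H] [InnerProductSpace ℂ H] [CompleteSpace H]
    {A V B : H →L[ℂ] H} (hA : IsSelfAdjoint A) (hV : IsSelfAdjoint V) (hB : B = A + V)
    {σ Sig : Set ℝ} (hσ : MeasurableSet σ) (hSig : MeasurableSet Sig)
    (hspec : spectrum ℝ A ⊆ σ ∪ Sig) {d : ℝ} (hd0 : 0 < d)
    (hd : ∀ s ∈ σ, ∀ t ∈ Sig, d ≤ dist s t)
    {EA EB : Set ℝ → H →L[ℂ] H} (hEA : IsSpectralMeasure A EA) (hEB : IsSpectralMeasure B EB)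
    (hoff₁ : EA σ * V * EA σ = 0) (hoff₂ : EA Sig * V * EA Sig = 0)
    {δ : ℝ} (hδ : δ = ‖V‖ * Real.tan (Real.arctan (2 * ‖V‖ / d) / 2))
    (hnorm : ‖V‖ < (3 * π - √(π ^ 2 + 32)) / (π ^ 2 - 4) * d) :
    ‖EA σ - EB (Metric.thickening (d / 2) σ)‖ ≤ π / 2 * ‖V‖ / (d - δ) ∧
    π / 2 * ‖V‖ / (d - δ) < 1 := by
  subst hB
  have hcompl : EA Sig = EA σᶜ := by
    have hdisj (s : ℝ) (hs : s ∈ Sig) : s ∈ σᶜ := fun hsσ => by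
      simpa using hd0.trans_le (hd s hsσ s hs)
    rw [← hEA.inter_spectrum hA hSig, ← hEA.inter_spectrum hA hσ.compl]
    congr 1
    ext s
    exact and_congr_left fun hs => ⟨hdisj s, (hspec hs).resolve_left⟩
  have hpert : IsOffDiagonalPerturbation A V EA σ d :=
    ⟨hEA, hA, hV, hσ, hoff₁, hcompl ▸ hoff₂,
      fun s hs t ht => hd s hs t ((hspec ht.1).resolve_left ht.2)⟩
  have hvδ := sq_eq_of_eq_mul_tan_half_arctan hd0.ne' hδ
  have hδ0 : 0 ≤ δ := hδ ▸ mul_nonneg (norm_nonneg V) (tan_arctan_half_nonneg (by positivity))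
  have hlt := pi_div_two_mul_lt_sub_of_lt hd0 hδ0 hvδ hnorm
  have hδd := lt_half_of_pi_div_two_mul_lt_sub (norm_nonneg V) hd0 hvδ hlt
  rw [div_lt_one (by linarith), mul_div_assoc]
  exact ⟨hpert.norm_sub_thickening_le hEB hδ0 hvδ.le hδd, hlt⟩

/-- **Theorem A (ii) / Theorem 2.4.** Under the off-diagonal hypotheses, if
`‖V‖ < c_π d` with `c_π = (3π − √(π² + 32))/(π² − 4)`, then
`‖E_A(σ) − E_B(O_{d/2}(σ))‖ ≤ (π/2) ‖V‖/(d − δ_V) < 1`. -/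
theorem norm_diff_spectral_projections_lt_one
    {H : Type*} [NormedAddCommGroup H] [InnerProductSpace ℂ H] [CompleteSpace H]
    [TopologicalSpace.SeparableSpace H]
    (A V B : H →L[ℂ] H) (hA : IsSelfAdjoint A) (hV : IsSelfAdjoint V) (hB : B = A + V)
    (σ Sig : Set ℝ) (hσc : IsClosed σ) (hSigc : IsClosed Sig) (hdisj : Disjoint σ Sig)
    (hspec : spectrum ℝ A = σ ∪ Sig)
    (d : ℝ) (hd : d = sInf (Set.image2 dist σ Sig)) (hd0 : 0 < d)
    (EA EB : Set ℝ → H →L[ℂ] H) (hEA : IsSpectralMeasure A EA) (hEB : IsSpectralMeasure B EB)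
    (hoff₁ : EA σ * V * EA σ = 0) (hoff₂ : EA Sig * V * EA Sig = 0)
    (δ : ℝ) (hδ : δ = ‖V‖ * Real.tan (Real.arctan (2 * ‖V‖ / d) / 2))
    (hnorm : ‖V‖ < (3 * π - Real.sqrt (π ^ 2 + 32)) / (π ^ 2 - 4) * d) :
    ‖EA σ - EB (Metric.thickening (d / 2) σ)‖ ≤ π / 2 * ‖V‖ / (d - δ) ∧
    π / 2 * ‖V‖ / (d - δ) < 1 := by
  have hle (s : ℝ) (hs : s ∈ σ) (t : ℝ) (ht : t ∈ Sig) : d ≤ dist s t :=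
    hd ▸ csInf_le ⟨0, Set.forall_mem_image2.mpr fun _ _ _ _ => dist_nonneg⟩ ⟨s, hs, t, ht, rfl⟩
  exact norm_diff_spectral_projections_lt_one_general hA hV hB hσc.measurableSet
    hSigc.measurableSet hspec.le hd0 hle hEA hEB hoff₁ hoff₂ hδ hnorm
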